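/- arXiv:2308.02817 — 3 statements merged into one kernel-verified Lean document; each statement's English description precedes it below -/
import Mathlib

section
/- With a(n) = f_n(A_n) the size of the even set-alternating domain, the limit as m → ∞ of a(2m) / (2 + 2√2)^m exists and equals √2 / 4. -/
/-- `σ` is in the set-alternating domain of `A` on alternatives `{1,…,n}`
(alternative `m` is represented by the index `m-1 : Fin n`; `σ x` is the rank
of alternative `x`, smaller rank = better). For every triple `i < j < k`:
if the middle alternative `j` (whose 1-based name is `j+1`) is in `A`, then
`i` is never ranked below both `j` and `k` (1N3); otherwise `k` is never
ranked above both `i` and `j` (3N1). -/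
def inSetAltDomain (n : ℕ) (A : Finset ℕ) (σ : Equiv.Perm (Fin n)) : Prop :=
  ∀ i j k : Fin n, i < j → j < k →
    (((j : ℕ) + 1 ∈ A) → ¬ (σ j < σ i ∧ σ k < σ i)) ∧
    (((j : ℕ) + 1 ∉ A) → ¬ (σ k < σ i ∧ σ k < σ j))

/-- The set-alternating domain `D_n(A)`. -/
def setAltDomain (n : ℕ) (A : Finset ℕ) : Set (Equiv.Perm (Fin n)) :=
  {σ | inSetAltDomain n A σ}

/-- `f_n(A)`, the cardinality of `D_n(A)`. -/
noncomputable def fsize (n : ℕ) (A : Finset ℕ) : ℕ := (setAltDomain n A).ncard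

/-- The even set-alternating scheme: even numbers `2 ≤ j ≤ n-2` (`n` even) or
`2 ≤ j ≤ n-1` (`n` odd). -/
def evenA (n : ℕ) : Finset ℕ :=
  if Even n then (Finset.Icc 2 (n-2)).filter (fun j => Even j)
  else (Finset.Icc 2 (n-1)).filter (fun j => Even j)

/-- `a(n) = f_n(A_n)`, the size of the even set-alternating domain. -/
noncomputable def aseq (n : ℕ) : ℕ := fsize n (evenA n)

/-!
Build a ranking by inserting the alternatives in increasing order. The new largest alternative can
always go to the bottom, and the number `k` of other positions open to it determines how the ranking
evolves: an alternative subject to 3N1 leads to the labels `1` and `1, …, k`, and one subject to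
1N3 to `k + 1` and to `k` times `0`. Let `Fₖ` be the generating function, by pairs of insertions,
of the descendants of a ranking with label `k`. The kernel method solves the resulting linear
recurrence and gives `F₀ (2 - C²) = 1`, where `C = 1 + X C²` is the Catalan series. Therefore
`(1 - 4X - 4X²) F₀ = 1 - X (1 + 2X + C)`. Here `1 - 4X - 4X²` has its smallest root at
`1 / (2 + 2√2)`, inside the disc of convergence of `C`, where `C = √2`; so `F₀` has a simple pole
there, and its residue gives the constant.
-/

open Filter Finset Topology

open scoped PowerSeries

section Catalan

variable {R : Type*} [CommSemiring R]

lemma catalan_succ_mul_pow (z : R) (n : ℕ) :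
    (catalan (n + 1) : R) * z ^ (n + 1) = z * ∑ p ∈ antidiagonal n,
      (catalan p.1 * z ^ p.1) * (catalan p.2 * z ^ p.2) := by
  rw [catalan_succ', Nat.cast_sum, sum_mul, mul_sum]
  refine sum_congr rfl fun p hp => ?_
  rw [← HasAntidiagonal.mem_antidiagonal.1 hp]
  push_cast
  ring

lemma sum_sum_antidiagonal_le_sq_sum [PartialOrder R] [IsOrderedRing R] {f : ℕ → R}
    (hf : ∀ i, 0 ≤ f i) (n : ℕ) :
    ∑ i ∈ range n, ∑ p ∈ antidiagonal i, f p.1 * f p.2 ≤ (∑ i ∈ range n, f i) ^ 2 := by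
  have hdisj : (range n : Set ℕ).PairwiseDisjoint (antidiagonal : ℕ → Finset (ℕ × ℕ)) :=
    fun i _ j _ hij => disjoint_left.2 fun p hi hj => hij <|
      (HasAntidiagonal.mem_antidiagonal.1 hi).symm.trans (HasAntidiagonal.mem_antidiagonal.1 hj)
  rw [← sum_biUnion hdisj, sq, sum_mul_sum, ← sum_product']
  refine sum_le_sum_of_subset_of_nonneg (fun p hp => ?_) fun p _ _ => mul_nonneg (hf _) (hf _)
  simp only [mem_biUnion, mem_range, HasAntidiagonal.mem_antidiagonal, mem_product] at hp ⊢
  omega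

variable {z s : ℝ}

lemma sum_range_catalan_mul_pow_le (hz : 0 ≤ z) (hs : 0 ≤ s) (h : s = 1 + z * s ^ 2) (n : ℕ) :
    ∑ i ∈ range n, (catalan i : ℝ) * z ^ i ≤ s := by
  have hterm : ∀ i, 0 ≤ (catalan i : ℝ) * z ^ i := fun i => by positivity
  induction n with
  | zero => simpa using hs
  | succ n ih =>
    calc ∑ i ∈ range (n + 1), (catalan i : ℝ) * z ^ i
        = z * ∑ i ∈ range n, ∑ p ∈ antidiagonal i,
            (catalan p.1 * z ^ p.1) * (catalan p.2 * z ^ p.2) + 1 := by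
          simp only [sum_range_succ', catalan_succ_mul_pow, mul_sum, catalan_zero, Nat.cast_one,
            pow_zero, mul_one]
      _ ≤ z * s ^ 2 + 1 := by
          gcongr
          exact (sum_sum_antidiagonal_le_sq_sum hterm n).trans
            (pow_le_pow_left₀ (sum_nonneg fun i _ => hterm i) ih 2)
      _ = s := by linarith

-- The partial sums stay below `s`, the sum is a root of `t = 1 + z t²`, and `2 z s ≤ 1` says that
-- `s` is the smaller of the two roots.
lemma hasSum_catalan_mul_pow (hz : 0 ≤ z) (hs : 0 ≤ s) (h : s = 1 + z * s ^ 2)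
    (hzs : 2 * z * s ≤ 1) : HasSum (fun i => (catalan i : ℝ) * z ^ i) s := by
  have hterm : ∀ i, 0 ≤ (catalan i : ℝ) * z ^ i := fun i => by positivity
  have hle := sum_range_catalan_mul_pow_le hz hs h
  have hsum : Summable (fun i => (catalan i : ℝ) * z ^ i) := summable_of_sum_range_le hterm hle
  have hnorm : Summable (fun i => ‖(catalan i : ℝ) * z ^ i‖) := hsum.abs
  set t := ∑' i, (catalan i : ℝ) * z ^ i with ht
  have hts : t ≤ s := hsum.tsum_le_of_sum_range_le hle
  have hroot : t = 1 + z * t ^ 2 := by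
    calc t = 1 + ∑' i, (catalan (i + 1) : ℝ) * z ^ (i + 1) := by
          rw [ht, hsum.tsum_eq_zero_add]
          simp
      _ = 1 + z * t ^ 2 := by
          simp only [catalan_succ_mul_pow, tsum_mul_left]
          rw [sq, ht, tsum_mul_tsum_eq_tsum_sum_antidiagonal_of_summable_norm hnorm hnorm]
  have hst : s = t := by
    by_contra hne
    have hlt : t < s := lt_of_le_of_ne hts (Ne.symm hne)
    have hfactor : 1 - z * (s + t) = 0 := by
      refine (mul_eq_zero.1 ?_).resolve_left (sub_ne_zero.2 hne)
      linear_combination h - hroot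
    nlinarith [mul_nonneg hz (sub_nonneg.2 hts)]
  rw [hst]
  exact hsum.hasSum

end Catalan

section Asymptotics

variable {𝕜 : Type*} [NormedField 𝕜]

lemma tendsto_zero_of_tendsto_sub_mul {u : ℕ → 𝕜} {ρ : 𝕜} (hρ : ‖ρ‖ < 1)
    (h : Tendsto (fun n => u (n + 1) - ρ * u n) atTop (𝓝 0)) : Tendsto u atTop (𝓝 0) := by
  rw [Metric.tendsto_atTop] at h ⊢
  intro ε hε
  obtain ⟨N, hN⟩ := h (ε / 2 * (1 - ‖ρ‖)) (mul_pos (half_pos hε) (sub_pos.2 hρ))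
  have hstep : ∀ k, ‖u (N + k)‖ ≤ ‖ρ‖ ^ k * ‖u N‖ + ε / 2 := by
    intro k
    induction k with
    | zero => simpa using (half_pos hε).le
    | succ k ih =>
      have herr : ‖u (N + k + 1) - ρ * u (N + k)‖ ≤ ε / 2 * (1 - ‖ρ‖) := by
        simpa using (hN (N + k) (by omega)).le
      calc ‖u (N + k + 1)‖ = ‖(u (N + k + 1) - ρ * u (N + k)) + ρ * u (N + k)‖ := by
            rw [sub_add_cancel]
        _ ≤ ε / 2 * (1 - ‖ρ‖) + ‖ρ‖ * ‖u (N + k)‖ := by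
            rw [← norm_mul]
            exact norm_add_le_of_le herr le_rfl
        _ ≤ ε / 2 * (1 - ‖ρ‖) + ‖ρ‖ * (‖ρ‖ ^ k * ‖u N‖ + ε / 2) := by gcongr
        _ = ‖ρ‖ ^ (k + 1) * ‖u N‖ + ε / 2 := by ring
  have hgeom : Tendsto (fun k => ‖ρ‖ ^ k * ‖u N‖) atTop (𝓝 0) := by
    simpa using (tendsto_pow_atTop_nhds_zero_of_lt_one (norm_nonneg ρ) hρ).mul_const ‖u N‖
  obtain ⟨K, hK⟩ := eventually_atTop.1 (hgeom.eventually_lt_const (half_pos hε))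
  refine ⟨N + K, fun n hn => ?_⟩
  obtain ⟨k, rfl⟩ := Nat.exists_eq_add_of_le (show N ≤ n by omega)
  rw [dist_zero_right]
  linarith [hstep k, hK k (by omega)]

lemma tendsto_of_tendsto_sub_mul {u : ℕ → 𝕜} {ρ a : 𝕜} (hρ : ‖ρ‖ < 1)
    (h : Tendsto (fun n => u (n + 1) - ρ * u n) atTop (𝓝 a)) :
    Tendsto u atTop (𝓝 (a / (1 - ρ))) := by
  have hρ1 : 1 - ρ ≠ 0 := sub_ne_zero.2 (by rintro rfl; simp at hρ)
  rw [← tendsto_sub_nhds_zero_iff] at h ⊢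
  refine tendsto_zero_of_tendsto_sub_mul hρ (h.congr fun n => ?_)
  field_simp
  ring

open PowerSeries in
lemma sum_range_coeff_one_sub_C_mul_X_mul_div_pow {r : 𝕜} (hr : r ≠ 0) (f : 𝕜⟦X⟧) (n : ℕ) :
    ∑ i ∈ range (n + 1), coeff i ((1 - C r * X) * f) / r ^ i = coeff n f / r ^ n := by
  induction n with
  | zero => simp [sub_mul, mul_assoc]
  | succ n ih =>
    rw [sum_range_succ, ih, sub_mul, one_mul, mul_assoc, map_sub, coeff_C_mul, coeff_succ_X_mul]
    field_simp
    ring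

-- Singularity analysis at a simple pole: `f` is a series converging at `1 / r`, divided by
-- `(1 - r X) (1 - q X)` with `1 / q` outside the disc.
open PowerSeries in
lemma tendsto_coeff_div_pow {r q a : 𝕜} (hq : ‖q‖ < ‖r‖) {f : 𝕜⟦X⟧}
    (h : HasSum (fun n => coeff n ((1 - C r * X) * ((1 - C q * X) * f)) / r ^ n) a) :
    Tendsto (fun n => coeff n f / r ^ n) atTop (𝓝 (a / (1 - q / r))) := by
  have hr : r ≠ 0 := norm_pos_iff.1 ((norm_nonneg q).trans_lt hq)
  have hlim : Tendsto (fun n => coeff n ((1 - C q * X) * f) / r ^ n) atTop (𝓝 a) :=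
    ((tendsto_add_atTop_iff_nat 1).2 h.tendsto_sum_nat).congr
      (sum_range_coeff_one_sub_C_mul_X_mul_div_pow hr _)
  refine tendsto_of_tendsto_sub_mul ?_
    (((tendsto_add_atTop_iff_nat 1).2 hlim).congr fun n => ?_)
  · rwa [norm_div, div_lt_one (norm_pos_iff.2 hr)]
  · rw [sub_mul, one_mul, mul_assoc, map_sub, coeff_C_mul, coeff_succ_X_mul]
    field_simp
    ring

open PowerSeries in
lemma hasSum_coeff_C_div_pow (a r : 𝕜) :
    HasSum (fun n => coeff n (C a) / r ^ n) a := by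
  simpa using hasSum_single (f := fun n => coeff n (C a) / r ^ n) 0
    fun n hn => by simp [coeff_C, hn]

open PowerSeries in
lemma hasSum_coeff_X_mul_div_pow {r a : 𝕜} {f : 𝕜⟦X⟧}
    (h : HasSum (fun n => coeff n f / r ^ n) a) :
    HasSum (fun n => coeff n (X * f) / r ^ n) (a / r) := by
  rw [← hasSum_nat_add_iff' 1]
  simpa [coeff_succ_X_mul, pow_succ, div_div] using h.div_const r

end Asymptotics

-- Kernel method: `c` is the root of `X t² = t - 1` that is a power series. The defect
-- `e (k + 1) - c * e k` is a multiple of `X` times the next one, so every power of `X` divides it.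
open PowerSeries in
lemma eq_mul_of_X_mul_eq_sub {R : Type*} [CommRing R] {c : R⟦X⟧} (hc : c = 1 + X * c ^ 2)
    {e : ℕ → R⟦X⟧} (he : ∀ k, X * e (k + 2) = e (k + 1) - e k) (k : ℕ) :
    e (k + 1) = c * e k := by
  have hq : ∀ k, e (k + 1) - c * e k = X * (c * (e (k + 2) - c * e (k + 1))) := fun k => by
    linear_combination -c * he k - e (k + 1) * hc
  have hdvd : ∀ j k, (X : R⟦X⟧) ^ j ∣ e (k + 1) - c * e k := by
    intro j
    induction j with
    | zero => simp
    | succ j ih =>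
      intro k
      rw [hq k, pow_succ']
      exact mul_dvd_mul_left _ ((ih (k + 1)).mul_left c)
  rw [← sub_eq_zero]
  ext n
  exact X_pow_dvd_iff.1 (hdvd (n + 1) k) n n.lt_succ_self

lemma sum_card_filter_le {α M : Type*} [LinearOrder α] [AddCommMonoid M] (s : Finset α)
    (f : ℕ → M) : ∑ a ∈ s, f #{b ∈ s | b ≤ a} = ∑ k ∈ range #s, f (k + 1) := by
  induction s using Finset.induction_on_max with
  | empty => simp
  | insert a s hlt ih =>
    have ha : a ∉ s := fun h => (hlt a h).false
    have hmem : ∀ x ∈ s, #{b ∈ insert a s | b ≤ x} = #{b ∈ s | b ≤ x} := fun x hx => by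
      rw [filter_insert, if_neg (hlt x hx).not_ge]
    have hmax : {b ∈ insert a s | b ≤ a} = insert a s :=
      filter_true_of_mem fun b hb => (mem_insert.1 hb).elim le_of_eq fun h => (hlt b h).le
    rw [sum_insert ha, hmax, sum_congr rfl fun x hx => congrArg f (hmem x hx), ih,
      card_insert_of_notMem ha, sum_range_succ, add_comm]

lemma eq_and_eq_of_take_append_cons_drop_eq {α : Type*} {a : α} {l l' : List α} {p q : ℕ}
    (ha : a ∉ l') (hp : p ≤ l.length) (hq : q ≤ l'.length)
    (h : l.take p ++ a :: l.drop p = l'.take q ++ a :: l'.drop q) : l = l' ∧ p = q := by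
  obtain ⟨htake, -, hdrop⟩ := (List.append_cons_inj_of_notMem
    (fun h => ha (List.mem_of_mem_take h)) (fun h => ha (List.mem_of_mem_drop h))).1 h.symm
  constructor
  · rw [← List.take_append_drop p l, ← htake, ← hdrop, List.take_append_drop]
  · rw [← List.length_take_of_le hp, ← htake, List.length_take_of_le hq]

/-- The set-alternating condition on three alternatives ranked in the order `x`, `y`, `z` from worst
to best. Alternatives are indexed from `0`, so index `j` is the alternative `j + 1`, and `S` is the
set of indices subject to 1N3, the other ones being subject to 3N1. -/
def Admissible (S : Set ℕ) (x y z : ℕ) : Prop :=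
  (x < y → x < z → min y z ∉ S) ∧ (x < z → y < z → max x y ∈ S)

/-- The condition for adding a new largest alternative between the lower part `T` and the upper
part `U` of a ranking listed from worst to best. Its two parts are the triples with the new
alternative at the top and in the middle; at the bottom, it is always admissible. -/
def Insertable (S : Set ℕ) (T U : List ℕ) : Prop :=
  T.Pairwise (fun x y => y ≤ x ∧ x ∈ S) ∧ ∀ x ∈ T, ∀ y ∈ U, x < y → y ∉ S

section Insertion

variable {S : Set ℕ} {T U l : List ℕ} {n p : ℕ}

lemma triplewise_admissible_append_cons_iff (hT : ∀ x ∈ T, x < n) (hU : ∀ x ∈ U, x < n) :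
    (T ++ n :: U).Triplewise (Admissible S) ↔
      (T ++ U).Triplewise (Admissible S) ∧ Insertable S T U := by
  have htop : T.Pairwise (fun x y => Admissible S x y n) ↔
      T.Pairwise (fun x y => y ≤ x ∧ x ∈ S) := by
    refine List.Pairwise.iff_of_mem fun {x y} hx hy => ?_
    have hxn := hT x hx
    have hyn := hT y hy
    rcases lt_or_ge x y with hxy | hyx
    · simp [Admissible, hxn, hyn, hxy, hxy.le, hxy.not_ge, min_eq_left hyn.le]
    · simp [Admissible, hxn, hyn, hyx, hyx.not_gt]
  have hmid : (∀ x ∈ T, ∀ y ∈ U, Admissible S x n y) ↔ ∀ x ∈ T, ∀ y ∈ U, x < y → y ∉ S :=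
    forall₂_congr fun x hx => forall₂_congr fun y hy => by
      simp [Admissible, hT x hx, (hU y hy).le, (hU y hy).not_gt]
  have hbot : U.Pairwise (Admissible S n) := by
    refine List.Pairwise.imp_of_mem (R := fun _ _ => True) (fun {x y} hx hy _ => ?_)
      (List.pairwise_of_forall fun _ _ => trivial)
    simp [Admissible, (hU x hx).not_gt, (hU y hy).not_gt]
  simp only [Insertable, ← htop, ← hmid, List.triplewise_append, List.triplewise_cons,
    List.pairwise_cons, List.forall_mem_cons, forall_and]
  tauto

lemma insertable_cons_iff (hT : ∀ x ∈ T, x < n) (hU : ∀ x ∈ U, x < n) :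
    Insertable S (n :: T) U ↔ (T = [] ∨ n ∈ S) ∧ Insertable S T U := by
  have hle : (∀ y ∈ T, y ≤ n ∧ n ∈ S) ↔ T = [] ∨ n ∈ S := by
    rcases T with _ | ⟨t, T⟩
    · simp
    · simp only [reduceCtorEq, false_or]
      exact ⟨fun h => (h t (by simp)).2, fun h y hy => ⟨(hT y hy).le, h⟩⟩
  have hgt : ∀ y ∈ U, n < y → y ∉ S := fun y hy hny => absurd hny (hU y hy).not_gt
  simp only [Insertable, List.pairwise_cons, List.forall_mem_cons, hle]
  tauto

lemma insertable_append_cons_iff {T' : List ℕ} (hne : T ≠ []) (hT : ∀ x ∈ T, x < n) :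
    Insertable S T (T' ++ n :: U) ↔ n ∉ S ∧ Insertable S T (T' ++ U) := by
  have hn : (∀ x ∈ T, x < n → n ∉ S) ↔ n ∉ S :=
    ⟨fun h => h _ (List.head_mem hne) (hT _ (List.head_mem hne)), fun h _ _ _ => h⟩
  simp only [Insertable, List.mem_append, List.mem_cons, or_imp, forall_and, forall_eq, hn]
  tauto

lemma not_insertable_append_cons (hne : T ≠ []) (hT : ∀ x ∈ T, x < n) (T' : List ℕ) :
    ¬ Insertable S (T ++ n :: T') U := fun h =>
  (hT _ (List.head_mem hne)).not_ge
    ((List.pairwise_append.1 h.1).2.2 _ (List.head_mem hne) n List.mem_cons_self).1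

open Classical in
/-- The positions at which a new largest alternative may be inserted into the ranking `l`, except
for the bottom position `0`, which is always available. Their number is the label of `l` in the
generating tree of the domain. -/
noncomputable def upperSites (S : Set ℕ) (l : List ℕ) : Finset ℕ :=
  {p ∈ Icc 1 l.length | Insertable S (l.take p) (l.drop p)}

lemma mem_upperSites :
    p ∈ upperSites S l ↔ (1 ≤ p ∧ p ≤ l.length) ∧ Insertable S (l.take p) (l.drop p) := by
  simp [upperSites]

lemma take_ne_nil_of_mem_upperSites (hp : p ∈ upperSites S l) : l.take p ≠ [] := by
  obtain ⟨⟨hp1, hpl⟩, -⟩ := mem_upperSites.1 hp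
  rw [← List.length_pos_iff, List.length_take_of_le hpl]
  exact hp1

lemma mem_insert_zero_upperSites_iff :
    p ∈ insert 0 (upperSites S l) ↔ p ≤ l.length ∧ Insertable S (l.take p) (l.drop p) := by
  rcases Nat.eq_zero_or_pos p with rfl | hp
  · simp [Insertable]
  · simp [mem_upperSites, hp.ne', Nat.one_le_iff_ne_zero]

lemma succ_mem_upperSites_cons_iff (hl : ∀ x ∈ l, x < n) :
    p + 1 ∈ upperSites S (n :: l) ↔ p = 0 ∨ n ∈ S ∧ p ∈ upperSites S l := by
  rw [mem_upperSites, mem_upperSites, List.take_succ_cons, List.drop_succ_cons,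
    insertable_cons_iff (fun x hx => hl x (List.mem_of_mem_take hx))
      (fun x hx => hl x (List.mem_of_mem_drop hx))]
  rcases Nat.eq_zero_or_pos p with rfl | hp
  · simp [Insertable]
  · simp only [List.take_eq_nil_iff, List.length_cons, Nat.add_le_add_iff_right, hp.ne', false_or]
    constructor
    · rintro ⟨⟨-, hpl⟩, h | h, hins⟩
      · simp only [h, List.length_nil] at hpl
        omega
      · exact ⟨h, ⟨hp, hpl⟩, hins⟩
    · rintro ⟨h, ⟨-, hpl⟩, hins⟩
      exact ⟨⟨by omega, hpl⟩, Or.inr h, hins⟩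

lemma card_upperSites_cons_of_notMem (hl : ∀ x ∈ l, x < n) (hn : n ∉ S) :
    #(upperSites S (n :: l)) = 1 := by
  have h : upperSites S (n :: l) = {1} := by
    ext p
    rcases p with _ | p
    · simp [mem_upperSites]
    · simp [succ_mem_upperSites_cons_iff hl, hn]
  rw [h, card_singleton]

lemma card_upperSites_cons_of_mem (hl : ∀ x ∈ l, x < n) (hn : n ∈ S) :
    #(upperSites S (n :: l)) = #(upperSites S l) + 1 := by
  have h : upperSites S (n :: l) = (insert 0 (upperSites S l)).map (addRightEmbedding 1) := by
    ext p
    rcases p with _ | p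
    · simp [mem_upperSites]
    · simp [succ_mem_upperSites_cons_iff hl, hn]
  rw [h, card_map, card_insert_of_notMem (by simp [mem_upperSites])]

lemma mem_upperSites_append_cons_iff (hne : T ≠ []) (hT : ∀ x ∈ T, x < n) :
    p ∈ upperSites S (T ++ n :: U) ↔ p ≤ T.length ∧ n ∉ S ∧ p ∈ upperSites S (T ++ U) := by
  rw [mem_upperSites, mem_upperSites]
  rcases le_or_gt p T.length with hp | hp
  · rw [List.take_append_of_le_length hp, List.take_append_of_le_length hp,
      List.drop_append_of_le_length hp, List.drop_append_of_le_length hp]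
    rcases Nat.eq_zero_or_pos p with rfl | hp1
    · simp
    · rw [insertable_append_cons_iff (by simp [hne, hp1.ne'])
        (fun x hx => hT x (List.mem_of_mem_take hx))]
      simp only [List.length_append, List.length_cons]
      have hlen : p ≤ T.length + U.length := by omega
      have hlen' : p ≤ T.length + (U.length + 1) := by omega
      tauto
  · obtain ⟨k, rfl⟩ := Nat.exists_eq_add_of_lt hp
    rw [show T.length + k + 1 = T.length + (k + 1) by rfl, List.take_length_add_append,
      List.take_succ_cons]
    simp only [not_insertable_append_cons hne hT, and_false, false_iff]
    omega

lemma upperSites_append_cons_of_notMem (hne : T ≠ []) (hT : ∀ x ∈ T, x < n) (hn : n ∉ S) :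
    upperSites S (T ++ n :: U) = {p ∈ upperSites S (T ++ U) | p ≤ T.length} := by
  ext p
  simp [mem_upperSites_append_cons_iff hne hT, hn, and_comm]

lemma upperSites_append_cons_of_mem (hne : T ≠ []) (hT : ∀ x ∈ T, x < n) (hn : n ∈ S) :
    upperSites S (T ++ n :: U) = ∅ := by
  ext p
  simp [mem_upperSites_append_cons_iff hne hT, hn]

end Insertion

open Classical in
/-- The set-alternating domain on the indices `0, …, n - 1`, where `S` is the set of indices subject
to 1N3, as a set of lists from worst to best. -/
noncomputable def rankings (S : Set ℕ) (n : ℕ) : Finset (List ℕ) :=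
  {l ∈ (List.range n).permutations.toFinset | l.Triplewise (Admissible S)}

section Rankings

variable {S : Set ℕ} {l : List ℕ} {n : ℕ}

lemma mem_rankings : l ∈ rankings S n ↔ l.Perm (List.range n) ∧ l.Triplewise (Admissible S) := by
  simp [rankings]

lemma lt_of_mem_rankings (hl : l ∈ rankings S n) : ∀ x ∈ l, x < n := fun _ hx =>
  List.mem_range.1 ((mem_rankings.1 hl).1.mem_iff.1 hx)

lemma rankings_zero : rankings S 0 = {[]} := by
  ext l
  simp only [mem_rankings, List.range_zero, List.perm_nil, mem_singleton, and_iff_left_iff_imp]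
  rintro rfl
  simp

lemma append_cons_mem_rankings_iff {T U : List ℕ} :
    T ++ n :: U ∈ rankings S (n + 1) ↔ T ++ U ∈ rankings S n ∧ Insertable S T U := by
  have hperm : (T ++ n :: U).Perm (List.range (n + 1)) ↔ (T ++ U).Perm (List.range n) := by
    rw [List.range_succ, List.perm_middle.congr_left, List.perm_append_singleton n _
      |>.congr_right, List.perm_cons]
  rw [mem_rankings, mem_rankings, hperm, and_assoc]
  refine and_congr_right fun h =>
    triplewise_admissible_append_cons_iff (fun x hx => ?_) fun x hx => ?_
  · exact List.mem_range.1 (h.mem_iff.1 (List.mem_append_left _ hx))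
  · exact List.mem_range.1 (h.mem_iff.1 (List.mem_append_right _ hx))

lemma sum_rankings_succ {M : Type*} [AddCommMonoid M] (g : List ℕ → M) :
    ∑ l ∈ rankings S (n + 1), g l = ∑ l ∈ rankings S n,
      (g (n :: l) + ∑ p ∈ upperSites S l, g (l.take p ++ n :: l.drop p)) := by
  have hzero : ∀ l, 0 ∉ upperSites S l := by simp [mem_upperSites]
  calc ∑ l ∈ rankings S (n + 1), g l
      = ∑ q ∈ (rankings S n).sigma fun l => insert 0 (upperSites S l),
          g (q.1.take q.2 ++ n :: q.1.drop q.2) := by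
        refine (sum_bij (fun q _ => q.1.take q.2 ++ n :: q.1.drop q.2) (fun q hq => ?_)
          (fun q hq r hr hqr => ?_) (fun l hl => ?_) fun _ _ => rfl).symm
        · obtain ⟨hq1, hq2⟩ := mem_sigma.1 hq
          rw [append_cons_mem_rankings_iff, List.take_append_drop]
          exact ⟨hq1, (mem_insert_zero_upperSites_iff.1 hq2).2⟩
        · obtain ⟨-, hq2⟩ := mem_sigma.1 hq
          obtain ⟨hr1, hr2⟩ := mem_sigma.1 hr
          obtain ⟨h1, h2⟩ := eq_and_eq_of_take_append_cons_drop_eq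
            (fun h => (lt_of_mem_rankings hr1 _ h).false)
            (mem_insert_zero_upperSites_iff.1 hq2).1 (mem_insert_zero_upperSites_iff.1 hr2).1 hqr
          exact Sigma.ext h1 (heq_of_eq h2)
        · have hn : n ∈ l := (mem_rankings.1 hl).1.mem_iff.2 (List.mem_range.2 n.lt_succ_self)
          obtain ⟨T, U, rfl⟩ := List.append_of_mem hn
          obtain ⟨hTU, hins⟩ := append_cons_mem_rankings_iff.1 hl
          refine ⟨⟨T ++ U, T.length⟩, mem_sigma.2 ⟨hTU, ?_⟩, by simp⟩
          rw [mem_insert_zero_upperSites_iff]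
          simpa using hins
    _ = ∑ l ∈ rankings S n, (g (n :: l) + ∑ p ∈ upperSites S l, g (l.take p ++ n :: l.drop p)) := by
        rw [sum_sigma]
        exact sum_congr rfl fun l _ => by rw [sum_insert (hzero l)]; rfl

lemma sum_card_upperSites_succ_of_notMem {M : Type*} [AddCommMonoid M] (hn : n ∉ S) (g : ℕ → M) :
    ∑ l ∈ rankings S (n + 1), g #(upperSites S l) =
      ∑ l ∈ rankings S n, (g 1 + ∑ k ∈ range #(upperSites S l), g (k + 1)) := by
  rw [sum_rankings_succ fun l => g #(upperSites S l)]
  refine sum_congr rfl fun l hl => ?_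
  have hlt := lt_of_mem_rankings hl
  rw [card_upperSites_cons_of_notMem hlt hn, ← sum_card_filter_le]
  congr 1
  refine sum_congr rfl fun p hp => ?_
  obtain ⟨⟨-, hpl⟩, -⟩ := mem_upperSites.1 hp
  rw [upperSites_append_cons_of_notMem (take_ne_nil_of_mem_upperSites hp)
    (fun x hx => hlt x (List.mem_of_mem_take hx)) hn, List.take_append_drop,
    List.length_take_of_le hpl]

lemma sum_card_upperSites_succ_of_mem {M : Type*} [AddCommMonoid M] (hn : n ∈ S) (g : ℕ → M) :
    ∑ l ∈ rankings S (n + 1), g #(upperSites S l) =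
      ∑ l ∈ rankings S n, (g (#(upperSites S l) + 1) + #(upperSites S l) • g 0) := by
  rw [sum_rankings_succ fun l => g #(upperSites S l)]
  refine sum_congr rfl fun l hl => ?_
  have hlt := lt_of_mem_rankings hl
  rw [card_upperSites_cons_of_mem hlt hn, ← sum_const]
  congr 1
  refine sum_congr rfl fun p hp => ?_
  rw [upperSites_append_cons_of_mem (take_ne_nil_of_mem_upperSites hp)
    (fun x hx => hlt x (List.mem_of_mem_take hx)) hn, card_empty]

end Rankings

section Domain

variable {n : ℕ}

/-- The ranking encoded by the rank function `σ`, whose smallest rank `0` is the best one, as a list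
of indices from worst to best. -/
def worstToBest (σ : Equiv.Perm (Fin n)) : List ℕ :=
  List.ofFn fun p => (σ.symm p.rev : ℕ)

lemma worstToBest_perm (σ : Equiv.Perm (Fin n)) : (worstToBest σ).Perm (List.range n) := by
  rw [← List.map_coe_finRange_eq_range, ← List.ofFn_eq_map]
  exact Equiv.Perm.ofFn_comp_perm (Fin.revPerm.trans σ.symm) Fin.val

lemma worstToBest_injective : Function.Injective (worstToBest (n := n)) := fun σ τ h => by
  have hfun := List.ofFn_injective h
  refine Equiv.symm_bijective.injective (Equiv.ext fun x => Fin.ext ?_)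
  simpa using congrFun hfun x.rev

lemma range_worstToBest : Set.range (worstToBest (n := n)) = {l | l.Perm (List.range n)} := by
  have h : univ.image (worstToBest (n := n)) = (List.range n).permutations.toFinset := by
    refine eq_of_subset_of_card_le (fun l hl => ?_) ?_
    · obtain ⟨σ, -, rfl⟩ := mem_image.1 hl
      simpa using worstToBest_perm σ
    · rw [card_image_of_injective _ worstToBest_injective, card_univ, Fintype.card_perm,
        List.toFinset_card_of_nodup (List.nodup_permutations _ List.nodup_range),
        List.length_permutations]
      simp
  ext l
  simpa using congrArg (l ∈ ·) h

lemma triplewise_worstToBest_iff {P : ℕ → ℕ → ℕ → Prop} (σ : Equiv.Perm (Fin n)) :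
    (worstToBest σ).Triplewise P ↔ ∀ x y z : Fin n, σ y < σ x → σ z < σ y → P x y z := by
  rw [List.triplewise_iff_getElem]
  constructor
  · intro h x y z hyx hzy
    simpa only [worstToBest, List.getElem_ofFn, Fin.eta, Fin.rev_rev, Equiv.symm_apply_apply]
      using h (σ x).rev (σ y).rev (σ z).rev (Fin.rev_lt_rev.2 hyx)
      (Fin.rev_lt_rev.2 hzy) (by simp [worstToBest]; omega)
  · intro h i j k hij hjk hk
    simp only [worstToBest, List.getElem_ofFn]
    exact h _ _ _ (by simpa) (by simpa)

variable {A : Finset ℕ} {S : Set ℕ}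

lemma forall_admissible_iff_inSetAltDomain
    (hA : ∀ j, 0 < j → j + 1 < n → (j + 1 ∈ A ↔ j ∈ S)) (σ : Equiv.Perm (Fin n)) :
    (∀ x y z : Fin n, σ y < σ x → σ z < σ y → Admissible S x y z) ↔ inSetAltDomain n A σ := by
  constructor
  · intro h i j k hij hjk
    have hij' : (i : ℕ) < j := hij
    have hjk' : (j : ℕ) < k := hjk
    rw [hA j (by omega) (by omega)]
    refine ⟨fun hj ⟨hji, hki⟩ => ?_, fun hj ⟨hki, hkj⟩ => ?_⟩
    · rcases lt_or_gt_of_ne (σ.injective.ne hjk.ne) with hr | hr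
      · exact (h i k j hki hr).1 (hij.trans hjk) hij (by rwa [min_eq_right hjk'.le])
      · exact (h i j k hji hr).1 hij (hij.trans hjk) (by rwa [min_eq_left hjk'.le])
    · rcases lt_or_gt_of_ne (σ.injective.ne hij.ne) with hr | hr
      · exact hj (by simpa [max_eq_left hij'.le] using (h j i k hr hki).2 hjk (hij.trans hjk))
      · exact hj (by simpa [max_eq_right hij'.le] using (h i j k hr hkj).2 (hij.trans hjk) hjk)
  · intro h x y z hyx hzy
    have hzx := hzy.trans hyx
    refine ⟨fun hxy hxz hS => ?_, fun hxz hyz => ?_⟩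
    · rcases lt_or_gt_of_ne (ne_of_apply_ne σ hzy.ne) with hlt | hlt
      · rw [min_eq_right (Fin.le_def.1 hlt.le), ← hA z (by omega) (by omega)] at hS
        exact (h x z y hxz hlt).1 hS ⟨hzx, hyx⟩
      · rw [min_eq_left (Fin.le_def.1 hlt.le), ← hA y (by omega) (by omega)] at hS
        exact (h x y z hxy hlt).1 hS ⟨hyx, hzx⟩
    · by_contra hS
      rcases lt_or_gt_of_ne (ne_of_apply_ne σ hyx.ne) with hlt | hlt
      · rw [max_eq_left (Fin.le_def.1 hlt.le), ← hA x (by omega) (by omega)] at hS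
        exact (h y x z hlt hxz).2 hS ⟨hzy, hzx⟩
      · rw [max_eq_right (Fin.le_def.1 hlt.le), ← hA y (by omega) (by omega)] at hS
        exact (h x y z hlt hyz).2 hS ⟨hzx, hzy⟩

lemma fsize_eq_card_rankings (hA : ∀ j, 0 < j → j + 1 < n → (j + 1 ∈ A ↔ j ∈ S)) :
    fsize n A = #(rankings S n) := by
  have hpre : setAltDomain n A = worstToBest ⁻¹' rankings S n := by
    ext σ
    simp [setAltDomain, mem_rankings, worstToBest_perm, triplewise_worstToBest_iff,
      forall_admissible_iff_inSetAltDomain hA]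
  have hsub : (rankings S n : Set (List ℕ)) ⊆ Set.range (worstToBest (n := n)) := fun l hl => by
    rw [range_worstToBest]
    exact (mem_rankings.1 hl).1
  rw [fsize, hpre, Set.ncard_preimage_of_injective_subset_range worstToBest_injective hsub,
    Set.ncard_coe_finset]

lemma aseq_eq_card_rankings (n : ℕ) : aseq n = #(rankings {j | Odd j} n) := by
  refine fsize_eq_card_rankings fun j hj hjn => ?_
  rw [evenA]
  split_ifs <;> simp only [mem_filter, mem_Icc, Set.mem_ofPred_eq] <;> grind

end Domain

/-- The number of rankings obtained by inserting `2 m` more alternatives into a ranking of an even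
number of alternatives that has `k` upper sites, when `S` is the set of odd indices. Of each two
insertions, the first one leads to rankings with `1` and `1, …, k` upper sites, and the second one
turns `j` upper sites into `j + 1` once and into `0` another `j` times. -/
def descendantCount : ℕ → ℕ → ℕ
  | 0, _ => 1
  | m + 1, k => descendantCount m 2 + descendantCount m 0 +
      ∑ w ∈ range k, (descendantCount m (w + 2) + (w + 1) * descendantCount m 0)

lemma sum_descendantCount_card_upperSites (m n : ℕ) :
    ∑ l ∈ rankings {j | Odd j} (2 * n), descendantCount m #(upperSites {j | Odd j} l) =
      #(rankings {j | Odd j} (2 * (n + m))) := by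
  induction m generalizing n with
  | zero => simp [descendantCount]
  | succ m ih =>
    rw [show n + (m + 1) = n + 1 + m by ring, ← ih (n + 1), mul_add_one,
      sum_card_upperSites_succ_of_mem (by simp),
      sum_card_upperSites_succ_of_notMem (by simp) fun k =>
        descendantCount m (k + 1) + k • descendantCount m 0]
    simp [descendantCount, add_assoc]

lemma card_rankings_odd (m : ℕ) : #(rankings {j | Odd j} (2 * m)) = descendantCount m 0 := by
  simpa [rankings_zero, upperSites] using (sum_descendantCount_card_upperSites m 0).symm

section GeneratingFunction

open PowerSeries

variable (R : Type*) [CommRing R]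

/-- The generating function `∑ m, descendantCount m k * X ^ m`. -/
noncomputable def descendantSeries (k : ℕ) : R⟦X⟧ :=
  mk fun m => (descendantCount m k : R)

lemma descendantSeries_zero :
    descendantSeries R 0 = 1 + X * (descendantSeries R 2 + descendantSeries R 0) := by
  ext m
  rcases m with _ | m <;> simp [descendantSeries, descendantCount, coeff_succ_X_mul, coeff_one]

lemma descendantSeries_succ_sub (k : ℕ) :
    descendantSeries R (k + 1) - descendantSeries R k =
      X * (descendantSeries R (k + 2) + (k + 1) • descendantSeries R 0) := by
  ext m
  rcases m with _ | m
  · simp [descendantSeries, descendantCount]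
  · rw [coeff_succ_X_mul, map_add, map_nsmul]
    simp [descendantSeries, descendantCount, sum_range_succ]

lemma map_catalanSeries_eq :
    catalanSeries.map (Nat.castRingHom R) = 1 + X * catalanSeries.map (Nat.castRingHom R) ^ 2 := by
  conv_lhs => rw [← catalanSeries_sq_mul_X_add_one]
  simp [mul_comm, add_comm]

lemma descendantSeries_zero_mul_two_sub_sq :
    descendantSeries R 0 * (2 - catalanSeries.map (Nat.castRingHom R) ^ 2) = 1 := by
  set c := catalanSeries.map (Nat.castRingHom R)
  have hc : c = 1 + X * c ^ 2 := map_catalanSeries_eq R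
  -- Adding multiples of `descendantSeries R 0` makes the recurrence homogeneous.
  let e (k : ℕ) : R⟦X⟧ :=
    X * descendantSeries R k + (1 + ((k : R⟦X⟧) - 1) * X) * descendantSeries R 0
  have he : ∀ k, X * e (k + 2) = e (k + 1) - e k := fun k => by
    simp only [e]
    push_cast
    linear_combination -X * descendantSeries_succ_sub R k
  have hone : descendantSeries R 1 = 2 * descendantSeries R 0 - 1 := by
    have h := descendantSeries_succ_sub R 0
    simp only [zero_add, one_smul] at h
    linear_combination h - descendantSeries_zero R
  have hker : X * descendantSeries R 1 + descendantSeries R 0 = c * descendantSeries R 0 := by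
    have h := eq_mul_of_X_mul_eq_sub hc he 0
    simp only [e, zero_add, Nat.cast_zero, Nat.cast_one] at h
    linear_combination h
  refine X_mul_cancel ?_
  linear_combination hker - X * hone + descendantSeries R 0 * hc

lemma one_sub_mul_descendantSeries_zero :
    (1 - 4 * X - 4 * X ^ 2) * descendantSeries R 0 =
      1 - X * (1 + 2 * X + catalanSeries.map (Nat.castRingHom R)) := by
  set c := catalanSeries.map (Nat.castRingHom R)
  linear_combination (1 - X - 2 * X ^ 2 - X * c) * descendantSeries_zero_mul_two_sub_sq R
    - descendantSeries R 0 * (-1 - 2 * X - c) * map_catalanSeries_eq R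

end GeneratingFunction

section Singularity

open PowerSeries

lemma inv_two_add_two_mul_sqrt_two : (2 + 2 * √2)⁻¹ = (√2 - 1) / 2 := by
  have hsq : √2 * √2 = 2 := Real.mul_self_sqrt zero_le_two
  field_simp
  linear_combination -hsq

lemma hasSum_coeff_catalanSeries_div_pow :
    HasSum (fun n => coeff n (catalanSeries.map (Nat.castRingHom ℝ)) / (2 + 2 * √2) ^ n) √2 := by
  have hsq : √2 * √2 = 2 := Real.mul_self_sqrt zero_le_two
  have hone : 1 < √2 := Real.lt_sqrt_of_sq_lt (by norm_num)
  have h := hasSum_catalan_mul_pow (z := (√2 - 1) / 2) (s := √2) (by linarith) (by linarith)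
    (by linear_combination (1 - √2) / 2 * hsq) (by linarith)
  rw [← inv_two_add_two_mul_sqrt_two] at h
  simpa [div_eq_mul_inv] using h

lemma hasSum_coeff_one_sub_X_mul_div_pow :
    HasSum (fun n => coeff n (1 - X * (1 + 2 * X + catalanSeries.map (Nat.castRingHom ℝ)))
      / (2 + 2 * √2) ^ n) (√2 - 1) := by
  have hsq : √2 * √2 = 2 := Real.mul_self_sqrt zero_le_two
  have hconst (a : ℝ) := hasSum_coeff_C_div_pow a (2 + 2 * √2)
  have hinner := ((hconst 1).add (hasSum_coeff_X_mul_div_pow (hconst 2))).add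
    hasSum_coeff_catalanSeries_div_pow
  simp only [← add_div, ← map_add] at hinner
  have h := (hconst 1).sub (hasSum_coeff_X_mul_div_pow hinner)
  have hval : 1 - (1 + 2 / (2 + 2 * √2) + √2) / (2 + 2 * √2) = √2 - 1 := by
    rw [div_eq_mul_inv, div_eq_mul_inv, inv_two_add_two_mul_sqrt_two]
    linear_combination -hsq
  simpa only [← sub_div, ← map_sub, hval, map_one, map_ofNat, mul_comm X 2] using h

lemma one_sub_C_mul_X_mul_one_sub_C_mul_X :
    (1 - C (2 + 2 * √2) * X) * (1 - C (2 - 2 * √2) * X) = 1 - 4 * X - 4 * X ^ 2 := by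
  have h : C √2 * C √2 = (2 : ℝ⟦X⟧) := by
    rw [← map_mul, Real.mul_self_sqrt zero_le_two, map_ofNat]
  simp only [map_add, map_sub, map_mul, map_ofNat]
  linear_combination -4 * X ^ 2 * h

lemma tendsto_descendantCount_div_pow :
    Tendsto (fun m => (descendantCount m 0 : ℝ) / (2 + 2 * √2) ^ m) atTop (𝓝 (√2 / 4)) := by
  have hone : 1 < √2 := Real.lt_sqrt_of_sq_lt (by norm_num)
  have hnorm : ‖2 - 2 * √2‖ < ‖2 + 2 * √2‖ := by
    rw [Real.norm_of_nonpos (by linarith), Real.norm_of_nonneg (by linarith)]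
    linarith
  have hval : (√2 - 1) / (1 - (2 - 2 * √2) / (2 + 2 * √2)) = √2 / 4 := by
    rw [one_sub_div (by positivity)]
    field_simp
    linear_combination 2 * Real.mul_self_sqrt zero_le_two
  have h := tendsto_coeff_div_pow hnorm (f := descendantSeries ℝ 0) (a := √2 - 1) (by
    rw [← mul_assoc, one_sub_C_mul_X_mul_one_sub_C_mul_X, one_sub_mul_descendantSeries_zero]
    exact hasSum_coeff_one_sub_X_mul_div_pow)
  simpa only [descendantSeries, coeff_mk, hval] using h

end Singularity

/-- `a(2m) / (2+2√2)^m → √2/4` as `m → ∞`. -/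
theorem stmt16 :
    Filter.Tendsto
      (fun m : ℕ => (aseq (2*m) : ℝ) / (2 + 2 * Real.sqrt 2) ^ m)
      Filter.atTop (nhds (Real.sqrt 2 / 4)) := by
  simp only [aseq_eq_card_rankings, card_rankings_odd]
  exact tendsto_descendantCount_div_pow
end

section
/- With a(n) = f_n(A_n) the size of the even set-alternating domain, the limit as n → ∞ of a(n)^{1/n} exists and equals √(2 + 2√2) ≈ 2.1973. In particular, for every real c with 0 < c < √(2 + 2√2) there is N such that a(n) > c^n for all n ≥ N. -/
/-!
Build the orders by inserting the alternatives `1, 2, …` one after the other. The ranks at which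
the next alternative may be inserted are the lowest `L + 1` ones, where the slack `L` evolves by a
rule depending only on the chosen rank and on whether the inserted alternative belongs to `A`.
Hence the cardinality of the domain is obtained by iterating transfer operators on functions of
`L`. For the even scheme, two consecutive insertions give the operator
`(T w) L = ∑ k ≤ L, (w 1 + w (k + 1))`, and `a(2t + 1) = (T ^ t 1) 1`.

The function `h L = 2 * √2 ^ L - √2` satisfies `T h = λ h` with `λ = 2 + 2 * √2`. Since `1 ≤ 2 h`,
this yields `a(2t + 1) = O(λ ^ t)`. As `h` is unbounded, the lower bound uses a second moment:
`T (2 ^ L) ≤ 4 * 2 ^ L + 4 h` and `4 < λ` give `(T ^ t 2 ^ L) 1 ≤ 8 λ ^ t`, and `h ≤ 8 + 2 ^ L / 8`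
turns this into `√2 * λ ^ t ≤ 8 a(2t + 1) + λ ^ t`.
-/

open Filter Finset Asymptotics
open scoped Topology

namespace SetAlternating

variable {A : Finset ℕ} {n : ℕ}

section Insertion

/-- The linear order on `n + 1` alternatives obtained from `τ` by ranking the new, last
alternative directly above the `k` worst ones, so that its rank is `k.rev`. -/
def insertLast (τ : Equiv.Perm (Fin n)) (k : Fin (n + 1)) : Equiv.Perm (Fin (n + 1)) :=
  finSuccEquivLast.trans ((Equiv.optionCongr τ).trans (finSuccEquiv' k.rev).symm)

/-- A new last alternative may be ranked directly above the `k` worst alternatives of `σ` without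
completing a triple forbidden by `A`. Alternative `i` is one of these `k` exactly when
`n ≤ σ i + k`. -/
def Admissible (A : Finset ℕ) (σ : Equiv.Perm (Fin n)) (k : ℕ) : Prop :=
  ∀ i j : Fin n, i < j →
    ((j : ℕ) + 1 ∈ A → ¬ (σ j < σ i ∧ n ≤ σ i + k)) ∧
    ((j : ℕ) + 1 ∉ A → ¬ (n ≤ σ i + k ∧ n ≤ σ j + k))

@[simp]
lemma insertLast_last (τ : Equiv.Perm (Fin n)) (k : Fin (n + 1)) :
    insertLast τ k (Fin.last n) = k.rev := by
  simp [insertLast]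

@[simp]
lemma insertLast_castSucc (τ : Equiv.Perm (Fin n)) (k : Fin (n + 1)) (i : Fin n) :
    insertLast τ k i.castSucc = k.rev.succAbove (τ i) := by
  simp [insertLast]

lemma insertLast_bijective :
    Function.Bijective fun x : Equiv.Perm (Fin n) × Fin (n + 1) ↦ insertLast x.1 x.2 := by
  refine (Fintype.bijective_iff_injective_and_card _).2 ⟨?_, ?_⟩
  · rintro ⟨τ, k⟩ ⟨τ', k'⟩ h
    obtain rfl : k = k' := by simpa using DFunLike.congr_fun h (Fin.last n)
    have hτ (i : Fin n) : τ i = τ' i := by simpa using DFunLike.congr_fun h i.castSucc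
    rw [Equiv.ext hτ]
  · simp [Fintype.card_perm, Nat.factorial_succ, mul_comm]

lemma rev_lt_rev_succAbove_iff (k : Fin (n + 1)) (a : Fin n) :
    k.rev < k.rev.succAbove a ↔ n ≤ a + k := by
  rw [Fin.lt_succAbove_iff_le_castSucc, Fin.le_def, Fin.val_rev, Fin.val_castSucc]
  omega

lemma inSetAltDomain_insertLast_iff (τ : Equiv.Perm (Fin n)) (k : Fin (n + 1)) :
    inSetAltDomain (n + 1) A (insertLast τ k) ↔ inSetAltDomain n A τ ∧ Admissible A τ k := by
  have not_last_lt (i : Fin n) : ¬ Fin.last n < i.castSucc := (Fin.castSucc_lt_last i).not_gt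
  simp only [inSetAltDomain, Admissible, Fin.forall_fin_succ', insertLast_castSucc,
    insertLast_last, Fin.castSucc_lt_castSucc_iff, Fin.castSucc_lt_last, not_last_lt, lt_irrefl,
    Fin.succAbove_lt_succAbove_iff, rev_lt_rev_succAbove_iff, Fin.val_castSucc, forall_and,
    false_imp_iff, imp_true_iff, true_imp_iff, and_true]
  exact and_and_and_comm

lemma le_rev_succAbove_add_iff (k : Fin (n + 1)) (a : Fin n) (m : ℕ) :
    n + 1 ≤ k.rev.succAbove a + m ↔ n ≤ a + if m ≤ k then m else m - 1 := by
  have hk := k.val_rev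
  rcases lt_or_ge a.castSucc k.rev with h | h
  · rw [Fin.succAbove_of_castSucc_lt _ _ h, Fin.val_castSucc]
    rw [Fin.lt_def, Fin.val_castSucc] at h
    split_ifs <;> omega
  · rw [Fin.succAbove_of_le_castSucc _ _ h, Fin.val_succ]
    rw [Fin.le_def, Fin.val_castSucc] at h
    split_ifs <;> omega

lemma admissible_insertLast_iff (τ : Equiv.Perm (Fin n)) (k : Fin (n + 1)) (m : ℕ) :
    Admissible A (insertLast τ k) m ↔
      Admissible A τ (if m ≤ k then m else m - 1) ∧
      ∀ a : Fin n,
        (n + 1 ∈ A → ¬ (n ≤ a + k ∧ n ≤ a + if m ≤ k then m else m - 1)) ∧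
        (n + 1 ∉ A → ¬ ((n ≤ a + if m ≤ k then m else m - 1) ∧ k < m)) := by
  have not_last_lt (i : Fin n) : ¬ Fin.last n < i.castSucc := (Fin.castSucc_lt_last i).not_gt
  have le_rev_add_iff : n + 1 ≤ k.rev + m ↔ k < m := by rw [Fin.val_rev]; omega
  rw [← τ.forall_congr_right]
  simp only [Admissible, Fin.forall_fin_succ', insertLast_castSucc, insertLast_last,
    Fin.castSucc_lt_castSucc_iff, Fin.castSucc_lt_last, not_last_lt, lt_irrefl,
    Fin.succAbove_lt_succAbove_iff, rev_lt_rev_succAbove_iff, le_rev_succAbove_add_iff,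
    le_rev_add_iff, Fin.val_castSucc, Fin.val_last, forall_and, false_imp_iff, imp_true_iff,
    true_imp_iff, and_true]
  exact and_and_and_comm

end Insertion

section Slack

lemma admissible_zero (σ : Equiv.Perm (Fin n)) : Admissible A σ 0 :=
  fun i _ _ ↦ ⟨fun _ h ↦ by omega, fun _ h ↦ by omega⟩

lemma Admissible.mono {σ : Equiv.Perm (Fin n)} {k m : ℕ} (hkm : k ≤ m) (h : Admissible A σ m) :
    Admissible A σ k :=
  fun i j hij ↦ ⟨fun hj hlt ↦ (h i j hij).1 hj ⟨hlt.1, by omega⟩,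
    fun hj hle ↦ (h i j hij).2 hj ⟨by omega, by omega⟩⟩

open Classical in
/-- The largest number of alternatives that a new last alternative may be ranked above. It is the
only feature of `σ` on which the possible extensions to more alternatives depend. -/
noncomputable def slack (A : Finset ℕ) (σ : Equiv.Perm (Fin n)) : ℕ :=
  Nat.findGreatest (Admissible A σ) n

lemma slack_le (σ : Equiv.Perm (Fin n)) : slack A σ ≤ n := by
  classical
  exact Nat.findGreatest_le n

lemma admissible_iff_le_slack {σ : Equiv.Perm (Fin n)} {k : ℕ} (hk : k ≤ n) :
    Admissible A σ k ↔ k ≤ slack A σ := by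
  classical
  refine ⟨Nat.le_findGreatest hk, fun h ↦ Admissible.mono h ?_⟩
  exact Nat.findGreatest_spec n.zero_le (admissible_zero σ)

lemma slack_eq_of_forall_admissible_iff {σ : Equiv.Perm (Fin n)} {s : ℕ} (hs : s ≤ n)
    (h : ∀ m ≤ n, Admissible A σ m ↔ m ≤ s) : slack A σ = s := by
  refine le_antisymm ((h _ (slack_le σ)).1 ?_) ((admissible_iff_le_slack hs).1 ((h s hs).2 le_rfl))
  exact (admissible_iff_le_slack (slack_le σ)).2 le_rfl

lemma slack_insertLast_of_mem (hn : n + 1 ∈ A) (τ : Equiv.Perm (Fin n)) (k : Fin (n + 1)) :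
    slack A (insertLast τ k) = if (k : ℕ) = 0 then slack A τ + 1 else 0 := by
  have hτ := slack_le (A := A) τ
  have hk := k.isLt
  refine slack_eq_of_forall_admissible_iff (by split_ifs <;> omega) fun m hm ↦ ?_
  rw [admissible_insertLast_iff, admissible_iff_le_slack (by split_ifs <;> omega)]
  simp only [hn, not_true, false_imp_iff, true_imp_iff, and_true]
  constructor
  · rintro ⟨hτm, hlast⟩
    by_cases hk0 : (k : ℕ) = 0
    · rw [if_pos hk0]
      split_ifs at hτm <;> omega
    · have hbottom := hlast ⟨n - 1, by omega⟩
      dsimp only at hbottom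
      rw [if_neg hk0]
      split_ifs at hbottom <;> omega
  · intro h
    refine ⟨by split_ifs at h ⊢ <;> omega, fun a ↦ ?_⟩
    have ha := a.isLt
    split_ifs at h ⊢ <;> omega

lemma slack_insertLast_of_notMem (hn : n + 1 ∉ A) {τ : Equiv.Perm (Fin n)} {k : Fin (n + 1)}
    (hk : Admissible A τ k) : slack A (insertLast τ k) = max (k : ℕ) 1 := by
  have hτ := slack_le (A := A) τ
  have hkn := k.isLt
  rw [admissible_iff_le_slack (by omega)] at hk
  refine slack_eq_of_forall_admissible_iff (by omega) fun m hm ↦ ?_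
  rw [admissible_insertLast_iff, admissible_iff_le_slack (by split_ifs <;> omega)]
  constructor
  · rintro ⟨-, hlast⟩
    by_contra! hc
    refine (hlast ⟨n - 1, by omega⟩).2 hn ?_
    dsimp only
    split_ifs <;> omega
  · intro h
    refine ⟨by split_ifs <;> omega, fun a ↦ ⟨fun hn' ↦ absurd hn' hn, fun _ ↦ ?_⟩⟩
    have ha := a.isLt
    split_ifs <;> omega

end Slack

section Transfer

variable {M : Type*} [AddCommMonoid M]

open Classical in
/-- The sum of `w (slack A σ)` over the set-alternating domain of `A`. The constant weight `1`
gives the cardinality; general weights are needed to express the recursion in `n`. -/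
noncomputable def weightedCount (A : Finset ℕ) (n : ℕ) (w : ℕ → M) : M :=
  ∑ σ : Equiv.Perm (Fin n) with inSetAltDomain n A σ, w (slack A σ)

/-- The transfer operator on weights describing the insertion of alternative `n + 1`: an order of
slack `L` has one extension for every `k ≤ L`, whose slack is the argument of `w`. -/
def transfer (A : Finset ℕ) (n : ℕ) (w : ℕ → M) (L : ℕ) : M :=
  ∑ k ∈ range (L + 1), w (if n + 1 ∈ A then if k = 0 then L + 1 else 0 else max k 1)

lemma natCast_fsize (R : Type*) [NonAssocSemiring R] (A : Finset ℕ) (n : ℕ) :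
    (fsize n A : R) = weightedCount A n fun _ ↦ 1 := by
  classical
  rw [weightedCount, ← cast_card, fsize, setAltDomain, ← Set.ncard_coe_finset]
  simp

lemma sum_perm_fin_succ (f : Equiv.Perm (Fin (n + 1)) → M) :
    ∑ σ, f σ = ∑ τ : Equiv.Perm (Fin n), ∑ k, f (insertLast τ k) := by
  rw [← insertLast_bijective.sum_comp, Fintype.sum_prod_type]

open Classical in
lemma sum_admissible_insertLast (τ : Equiv.Perm (Fin n)) (w : ℕ → M) :
    (∑ k : Fin (n + 1), if Admissible A τ k then w (slack A (insertLast τ k)) else 0) =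
      transfer A n w (slack A τ) := by
  set s := slack A τ with hs
  set F : ℕ → M := fun k ↦ w (if n + 1 ∈ A then if k = 0 then s + 1 else 0 else max k 1) with hF
  have hsn : s ≤ n := slack_le τ
  have hterm (k : Fin (n + 1)) :
      (if Admissible A τ k then w (slack A (insertLast τ k)) else 0) =
        if (k : ℕ) < s + 1 then F k else 0 := by
    have hk : Admissible A τ k ↔ (k : ℕ) < s + 1 := by
      rw [admissible_iff_le_slack (by omega), Nat.lt_succ_iff]
    refine ite_congr (propext hk) (fun h ↦ ?_) fun _ ↦ rfl
    by_cases hn : n + 1 ∈ A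
    · simp only [hF, if_pos hn, slack_insertLast_of_mem hn, hs]
    · simp only [hF, if_neg hn, slack_insertLast_of_notMem hn (hk.2 h)]
  calc ∑ k : Fin (n + 1), (if Admissible A τ k then w (slack A (insertLast τ k)) else 0)
      = ∑ k ∈ range (n + 1), if k < s + 1 then F k else 0 := by
        rw [← Fin.sum_univ_eq_sum_range fun k ↦ if k < s + 1 then F k else 0]
        exact sum_congr rfl fun k _ ↦ hterm k
    _ = ∑ k ∈ range (s + 1), F k := by
        rw [← sum_filter]
        congr 1
        ext k
        simp only [mem_filter, mem_range]
        omega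

lemma weightedCount_succ (A : Finset ℕ) (n : ℕ) (w : ℕ → M) :
    weightedCount A (n + 1) w = weightedCount A n (transfer A n w) := by
  classical
  simp only [weightedCount, sum_filter, sum_perm_fin_succ, inSetAltDomain_insertLast_iff]
  refine sum_congr rfl fun τ _ ↦ ?_
  split_ifs with h
  · simp only [h, true_and]
    exact sum_admissible_insertLast τ w
  · simp [h]

lemma transfer_of_mem (hn : n + 1 ∈ A) (w : ℕ → M) (L : ℕ) :
    transfer A n w L = w (L + 1) + L • w 0 := by
  simp [transfer, hn, sum_range_succ' _ L, add_comm]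

lemma transfer_of_notMem (hn : n + 1 ∉ A) (w : ℕ → M) (L : ℕ) :
    transfer A n w L = w 1 + ∑ k ∈ range L, w (k + 1) := by
  simp [transfer, hn, sum_range_succ' _ L, add_comm]

lemma weightedCount_zero (A : Finset ℕ) (w : ℕ → M) : weightedCount A 0 w = w 0 := by
  have hdomain (σ : Equiv.Perm (Fin 0)) : inSetAltDomain 0 A σ := fun i ↦ i.elim0
  have hslack (σ : Equiv.Perm (Fin 0)) : slack A σ = 0 := Nat.le_zero.1 (slack_le σ)
  simp [weightedCount, hdomain, hslack]

lemma weightedCount_one (A : Finset ℕ) (w : ℕ → M) : weightedCount A 1 w = w 1 := by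
  simp [weightedCount_succ, weightedCount_zero, transfer]

lemma fsize_le_fsize_succ (A : Finset ℕ) (n : ℕ) : fsize n A ≤ fsize (n + 1) A := by
  have hcount (m : ℕ) : fsize m A = weightedCount A m fun _ ↦ 1 := natCast_fsize ℕ A m
  rw [hcount, hcount, weightedCount_succ]
  exact sum_le_sum fun σ _ ↦ by simp [transfer]

lemma fsize_congr {A B : Finset ℕ} (h : ∀ m, 2 ≤ m → m < n → (m ∈ A ↔ m ∈ B)) :
    fsize n A = fsize n B := by
  suffices setAltDomain n A = setAltDomain n B by rw [fsize, fsize, this]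
  ext σ
  refine forall₅_congr fun i j k hij hjk ↦ ?_
  rw [h (j + 1) (by omega) (by omega)]

end Transfer

section PairTransfer

/-- The composite of `transfer A n` and `transfer A (n + 1)` when `n + 1 ∈ A` and `n + 2 ∉ A`: the
transfer operator of two consecutive insertions in the even scheme. -/
def pairTransfer : Module.End ℝ (ℕ → ℝ) where
  toFun w L := ∑ k ∈ range (L + 1), (w 1 + w (k + 1))
  map_add' v w := by
    ext L
    simp only [Pi.add_apply, add_add_add_comm, sum_add_distrib]
  map_smul' c w := by
    ext L
    simp [mul_sum, mul_add]

lemma pairTransfer_apply (w : ℕ → ℝ) (L : ℕ) :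
    pairTransfer w L = ∑ k ∈ range (L + 1), (w 1 + w (k + 1)) := rfl

lemma monotone_pairTransfer : Monotone pairTransfer :=
  fun v w h L ↦ by
    rw [pairTransfer_apply, pairTransfer_apply]
    exact sum_le_sum fun k _ ↦ add_le_add (h 1) (h (k + 1))

lemma monotone_pairTransfer_pow (t : ℕ) : Monotone (pairTransfer ^ t) := by
  rw [Module.End.coe_pow]
  exact monotone_pairTransfer.iterate t

lemma transfer_transfer (h₁ : n + 1 ∈ A) (h₂ : n + 2 ∉ A) (w : ℕ → ℝ) :
    transfer A n (transfer A (n + 1) w) = pairTransfer w := by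
  ext L
  rw [transfer_of_mem h₁, transfer_of_notMem h₂, transfer_of_notMem h₂, pairTransfer_apply,
    range_zero, sum_empty, add_zero, sum_add_distrib, sum_const, card_range, succ_nsmul']
  exact add_right_comm ..

lemma weightedCount_two_mul_add_one {t : ℕ}
    (hA : ∀ i < t, 2 * i + 2 ∈ A ∧ 2 * i + 3 ∉ A) (w : ℕ → ℝ) :
    weightedCount A (2 * t + 1) w = (pairTransfer ^ t) w 1 := by
  induction t generalizing w with
  | zero => exact weightedCount_one A w
  | succ t ih =>
    obtain ⟨hmem, hnotMem⟩ := hA t t.lt_succ_self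
    calc weightedCount A (2 * (t + 1) + 1) w
        = weightedCount A (2 * t + 1) (pairTransfer w) := by
          rw [← transfer_transfer hmem hnotMem, ← weightedCount_succ, ← weightedCount_succ]
          rfl
      _ = (pairTransfer ^ (t + 1)) w 1 := by
          rw [ih fun i hi ↦ hA i (by omega), pow_succ, Module.End.mul_apply]

lemma aseq_two_mul_add_one (t : ℕ) : (aseq (2 * t + 1) : ℝ) = (pairTransfer ^ t) 1 1 := by
  rw [aseq, natCast_fsize, weightedCount_two_mul_add_one fun i hi ↦ ?_]
  · rfl
  · rw [evenA, if_neg (by simp)]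
    simp only [mem_filter, mem_Icc, Nat.even_iff]
    omega

lemma monotone_aseq : Monotone aseq := by
  refine monotone_nat_of_le_succ fun n ↦ ?_
  refine (fsize_congr fun m hm hmn ↦ ?_).trans_le (fsize_le_fsize_succ (evenA (n + 1)) n)
  unfold evenA
  split_ifs <;> simp only [mem_filter, mem_Icc, Nat.even_iff] at * <;> omega

end PairTransfer

section RootGrowth

lemma isTheta_sqrt_pow_of_monotone {u : ℕ → ℝ} {c C r : ℝ} (hu : Monotone u) (hr : 1 ≤ r)
    (hc : 0 < c) (hlower : ∀ t, c * r ^ t ≤ u (2 * t + 1))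
    (hupper : ∀ t, u (2 * t + 1) ≤ C * r ^ t) : u =Θ[atTop] fun n ↦ √r ^ n := by
  have hr₀ : 0 ≤ r := zero_le_one.trans hr
  have hsqrt : 1 ≤ √r := Real.one_le_sqrt.2 hr
  have hsqrt_pow (t : ℕ) : √r ^ (2 * t) = r ^ t := by rw [pow_mul, Real.sq_sqrt hr₀]
  have hC : 0 ≤ C := by linarith [hlower 0, hupper 0, pow_zero r]
  have hu_pos {n : ℕ} (hn : 1 ≤ n) : 0 ≤ u n := by linarith [hlower 0, pow_zero r, hu hn]
  constructor
  · refine IsBigO.of_bound C ((eventually_ge_atTop 1).mono fun n hn ↦ ?_)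
    rw [Real.norm_of_nonneg (hu_pos hn), Real.norm_of_nonneg (by positivity)]
    calc u n ≤ u (2 * (n / 2) + 1) := hu (by omega)
      _ ≤ C * √r ^ (2 * (n / 2)) := hsqrt_pow _ ▸ hupper _
      _ ≤ C * √r ^ n := by gcongr; omega
  · refine IsBigO.of_bound (r / c) ((eventually_ge_atTop 1).mono fun n hn ↦ ?_)
    rw [Real.norm_of_nonneg (hu_pos hn), Real.norm_of_nonneg (by positivity), div_mul_eq_mul_div,
      le_div_iff₀ hc]
    calc √r ^ n * c ≤ √r ^ (2 * ((n - 1) / 2 + 1)) * c := by gcongr; omega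
      _ = r * (c * r ^ ((n - 1) / 2)) := by rw [hsqrt_pow]; ring
      _ ≤ r * u (2 * ((n - 1) / 2) + 1) := by gcongr; exact hlower _
      _ ≤ r * u n := by gcongr; exact hu (by omega)

lemma tendsto_const_mul_pow_rpow_one_div {c r : ℝ} (hc : 0 < c) (hr : 0 ≤ r) :
    Tendsto (fun n : ℕ ↦ (c * r ^ n) ^ (1 / (n : ℝ))) atTop (𝓝 r) := by
  have hconst : Tendsto (fun n : ℕ ↦ c ^ (1 / (n : ℝ)) * r) atTop (𝓝 (c ^ (0 : ℝ) * r)) :=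
    (tendsto_const_nhds.rpow tendsto_one_div_atTop_nhds_zero_nat (.inl hc.ne')).mul_const r
  rw [Real.rpow_zero, one_mul] at hconst
  refine hconst.congr' ((eventually_ne_atTop 0).mono fun n hn ↦ ?_)
  beta_reduce
  rw [Real.mul_rpow hc.le (by positivity), one_div, Real.pow_rpow_inv_natCast hr hn]

lemma tendsto_rpow_one_div_of_isTheta_pow {u : ℕ → ℝ} {r : ℝ} (hu : ∀ n, 0 ≤ u n) (hr : 0 ≤ r)
    (h : u =Θ[atTop] fun n ↦ r ^ n) :
    Tendsto (fun n : ℕ ↦ u n ^ (1 / (n : ℝ))) atTop (𝓝 r) := by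
  obtain ⟨C, hC, hupper⟩ := h.1.exists_pos
  obtain ⟨c, hc, hlower⟩ := h.2.exists_pos
  refine tendsto_of_tendsto_of_tendsto_of_le_of_le'
    (tendsto_const_mul_pow_rpow_one_div (inv_pos.2 hc) hr)
    (tendsto_const_mul_pow_rpow_one_div hC hr) ?_ ?_
  · filter_upwards [hlower.bound] with n hn
    rw [Real.norm_of_nonneg (pow_nonneg hr n), Real.norm_of_nonneg (hu n)] at hn
    gcongr
    exact (inv_mul_le_iff₀ hc).2 hn
  · filter_upwards [hupper.bound] with n hn
    rw [Real.norm_of_nonneg (pow_nonneg hr n), Real.norm_of_nonneg (hu n)] at hn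
    have := hu n
    gcongr

end RootGrowth

section Growth

lemma sub_one_mul_pairTransfer_pow (x : ℝ) (L : ℕ) :
    (x - 1) * pairTransfer (fun k ↦ x ^ k) L = x ^ 2 * x ^ L + (x - 1) * (L + 1) * x - x := by
  have hgeom := geom_sum_mul x (L + 1)
  have hsum : pairTransfer (fun k ↦ x ^ k) L =
      (L + 1) * x + (∑ k ∈ range (L + 1), x ^ k) * x := by
    simp [pairTransfer_apply, sum_add_distrib, pow_succ, sum_mul]
  rw [hsum]
  linear_combination x * hgeom

/-- The eigenfunction of `pairTransfer` for the eigenvalue `2 + 2 * √2`. For any `x`, the terms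
linear in `L` cancel when `pairTransfer` is applied to `2 * x ^ L - x`; the result is a multiple of
this weight when `x ^ 2 = 2`. -/
noncomputable def eigenweight (L : ℕ) : ℝ := 2 * √2 ^ L - √2

lemma pairTransfer_eigenweight : pairTransfer eigenweight = (2 + 2 * √2) • eigenweight := by
  have hsq : √2 ^ 2 = 2 := Real.sq_sqrt zero_le_two
  have hsplit : eigenweight = (2 : ℝ) • (fun k ↦ √2 ^ k) - √2 • fun k ↦ (1 : ℝ) ^ k := by
    ext L
    simp [eigenweight]
  ext L
  have hpow := sub_one_mul_pairTransfer_pow √2 L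
  have hone : pairTransfer (fun k ↦ (1 : ℝ) ^ k) L = 2 * (L + 1) := by
    simp only [pairTransfer_apply, one_pow, sum_const, card_range, nsmul_eq_mul]
    push_cast
    ring
  rw [Pi.smul_apply, smul_eq_mul, eigenweight, hsplit, map_sub, map_smul, map_smul, Pi.sub_apply,
    Pi.smul_apply, Pi.smul_apply, hone, smul_eq_mul, smul_eq_mul]
  linear_combination 2 * (√2 + 1) * hpow +
    (2 * √2 * (L + 1) + 2 * (√2 + 1) * √2 ^ L - 2 * pairTransfer (fun k ↦ √2 ^ k) L) * hsq

lemma pairTransfer_pow_eigenweight (t : ℕ) :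
    (pairTransfer ^ t) eigenweight 1 = √2 * (2 + 2 * √2) ^ t := by
  have hpow : (pairTransfer ^ t) eigenweight = (2 + 2 * √2) ^ t • eigenweight := by
    induction t with
    | zero => simp
    | succ t ih =>
      rw [pow_succ, Module.End.mul_apply, pairTransfer_eigenweight, map_smul, ih, smul_smul,
        ← pow_succ']
  rw [hpow, Pi.smul_apply, smul_eq_mul, eigenweight]
  ring

lemma sqrt_two_bounds : 1.4 < √2 ∧ √2 < 1.5 :=
  ⟨Real.lt_sqrt_of_sq_lt (by norm_num), (Real.sqrt_lt' (by norm_num)).2 (by norm_num)⟩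

lemma one_add_natCast_le_two_mul_eigenweight (L : ℕ) : 1 + L ≤ 2 * eigenweight L := by
  obtain ⟨hlb, hub⟩ := sqrt_two_bounds
  have hbernoulli : 1 + L * (√2 - 1) ≤ √2 ^ L := by
    simpa using one_add_mul_le_pow (by linarith : -2 ≤ √2 - 1) L
  rw [eigenweight]
  nlinarith [L.cast_nonneg (α := ℝ)]

lemma aseq_two_mul_add_one_le (t : ℕ) : (aseq (2 * t + 1) : ℝ) ≤ 2 * √2 * (2 + 2 * √2) ^ t := by
  have hle : (1 : ℕ → ℝ) ≤ (2 : ℝ) • eigenweight := fun L ↦ by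
    simp only [Pi.one_apply, Pi.smul_apply, smul_eq_mul]
    linarith [one_add_natCast_le_two_mul_eigenweight L, L.cast_nonneg (α := ℝ)]
  calc (aseq (2 * t + 1) : ℝ) = (pairTransfer ^ t) 1 1 := aseq_two_mul_add_one t
    _ ≤ (pairTransfer ^ t) ((2 : ℝ) • eigenweight) 1 := monotone_pairTransfer_pow t hle 1
    _ = 2 * √2 * (2 + 2 * √2) ^ t := by
      rw [map_smul, Pi.smul_apply, pairTransfer_pow_eigenweight, smul_eq_mul, mul_assoc]

lemma pairTransfer_two_pow_le :
    pairTransfer (fun L ↦ 2 ^ L) ≤ (4 : ℝ) • (fun L ↦ 2 ^ L) + (4 : ℝ) • eigenweight := by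
  intro L
  have hpow := sub_one_mul_pairTransfer_pow 2 L
  have hlin := one_add_natCast_le_two_mul_eigenweight L
  simp only [Pi.add_apply, Pi.smul_apply, smul_eq_mul]
  linarith

lemma pairTransfer_pow_two_pow_le (t : ℕ) :
    (pairTransfer ^ t) (fun L ↦ 2 ^ L) 1 ≤ 8 * (2 + 2 * √2) ^ t := by
  induction t with
  | zero => norm_num
  | succ t ih =>
    calc (pairTransfer ^ (t + 1)) (fun L ↦ 2 ^ L) 1
        = (pairTransfer ^ t) (pairTransfer fun L ↦ 2 ^ L) 1 := by
          rw [pow_succ, Module.End.mul_apply]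
      _ ≤ (pairTransfer ^ t) ((4 : ℝ) • (fun L ↦ 2 ^ L) + (4 : ℝ) • eigenweight) 1 :=
          monotone_pairTransfer_pow t pairTransfer_two_pow_le 1
      _ = 4 * (pairTransfer ^ t) (fun L ↦ 2 ^ L) 1 + 4 * (√2 * (2 + 2 * √2) ^ t) := by
          rw [map_add, map_smul, map_smul, Pi.add_apply, Pi.smul_apply, Pi.smul_apply,
            pairTransfer_pow_eigenweight, smul_eq_mul, smul_eq_mul]
      _ ≤ 4 * (8 * (2 + 2 * √2) ^ t) + 4 * (√2 * (2 + 2 * √2) ^ t) := by gcongr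
      _ = (32 + 4 * √2) * (2 + 2 * √2) ^ t := by ring
      _ ≤ (8 * (2 + 2 * √2)) * (2 + 2 * √2) ^ t := by
          gcongr
          linarith [sqrt_two_bounds.1]
      _ = 8 * (2 + 2 * √2) ^ (t + 1) := by ring

lemma le_aseq_two_mul_add_one (t : ℕ) : (2 + 2 * √2) ^ t / 20 ≤ (aseq (2 * t + 1) : ℝ) := by
  -- AM-GM: `2 * y ≤ 8 + y ^ 2 / 8` for `y = √2 ^ L`.
  have hle : eigenweight ≤ (8 : ℝ) • (1 : ℕ → ℝ) + (8⁻¹ : ℝ) • fun L ↦ 2 ^ L := fun L ↦ by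
    have hpow : (√2 ^ L) ^ 2 = 2 ^ L := by
      rw [← pow_mul, mul_comm, pow_mul, Real.sq_sqrt zero_le_two]
    simp only [eigenweight, Pi.add_apply, Pi.smul_apply, Pi.one_apply, smul_eq_mul]
    nlinarith [sq_nonneg (√2 ^ L - 8), sqrt_two_bounds.1]
  have hpos : 0 < (2 + 2 * √2) ^ t := by positivity
  have hbound := calc √2 * (2 + 2 * √2) ^ t = (pairTransfer ^ t) eigenweight 1 :=
      (pairTransfer_pow_eigenweight t).symm
    _ ≤ (pairTransfer ^ t) ((8 : ℝ) • (1 : ℕ → ℝ) + (8⁻¹ : ℝ) • fun L ↦ 2 ^ L) 1 :=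
      monotone_pairTransfer_pow t hle 1
    _ = 8 * aseq (2 * t + 1) + 8⁻¹ * (pairTransfer ^ t) (fun L ↦ 2 ^ L) 1 := by
      rw [map_add, map_smul, map_smul, Pi.add_apply, Pi.smul_apply, Pi.smul_apply,
        aseq_two_mul_add_one, smul_eq_mul, smul_eq_mul]
    _ ≤ 8 * aseq (2 * t + 1) + 8⁻¹ * (8 * (2 + 2 * √2) ^ t) := by
      gcongr
      exact pairTransfer_pow_two_pow_le t
  nlinarith [sqrt_two_bounds.1]

lemma aseq_isTheta_sqrt_pow :
    (fun n ↦ (aseq n : ℝ)) =Θ[atTop] fun n ↦ √(2 + 2 * √2) ^ n :=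
  isTheta_sqrt_pow_of_monotone (Nat.mono_cast.comp monotone_aseq)
    (by linarith [sqrt_two_bounds.1]) (by norm_num : (0 : ℝ) < 1 / 20)
    (fun t ↦ (one_div_mul_eq_div ..).trans_le (le_aseq_two_mul_add_one t))
    aseq_two_mul_add_one_le

end Growth

end SetAlternating

/-- `a(n)^{1/n} → √(2+2√2)`, and for every `0 < c < √(2+2√2)`
there is `N` with `a(n) > c^n` for all `n ≥ N`. -/
theorem stmt17 :
    Filter.Tendsto
      (fun n : ℕ => (aseq n : ℝ) ^ (1 / (n : ℝ)))
      Filter.atTop (nhds (Real.sqrt (2 + 2 * Real.sqrt 2))) ∧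
    ∀ c : ℝ, 0 < c → c < Real.sqrt (2 + 2 * Real.sqrt 2) →
      ∃ N : ℕ, ∀ n : ℕ, N ≤ n → c ^ n < (aseq n : ℝ) := by
  have hlim := SetAlternating.tendsto_rpow_one_div_of_isTheta_pow (fun n ↦ (aseq n).cast_nonneg)
    (Real.sqrt_nonneg _) SetAlternating.aseq_isTheta_sqrt_pow
  refine ⟨hlim, fun c hc hclt ↦ eventually_atTop.1 ?_⟩
  filter_upwards [hlim.eventually_const_lt hclt, eventually_ne_atTop 0] with n hroot hn
  calc c ^ n < ((aseq n : ℝ) ^ (1 / (n : ℝ))) ^ n := pow_lt_pow_left₀ hroot hc.le hn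
    _ = aseq n := by rw [one_div, Real.rpow_inv_natCast_pow (aseq n).cast_nonneg hn]
end

section
/- There exists a constant c > 0 such that for all n ≥ 5, f_n(B_n) ≥ c · (2 + 2√2)^{n/2}, where B_n = {2} ∪ {odd j : 3 ≤ j ≤ n−3} if n is even and B_n = {2} ∪ {odd j : 3 ≤ j ≤ n−2} if n is odd (the odd 1N33N1-alternating scheme). In other words, the odd 1N33N1-alternating scheme generates domains of size Ω((√(2+2√2))^n). -/
/-- The odd 1N33N1-alternating scheme:
`B_n = {2} ∪ {odd j : 3 ≤ j ≤ n-3}` for even `n`,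
`B_n = {2} ∪ {odd j : 3 ≤ j ≤ n-2}` for odd `n`. -/
def oddB (n : ℕ) : Finset ℕ :=
  if Even n then insert 2 ((Finset.Icc 3 (n-3)).filter (fun j => Odd j))
  else insert 2 ((Finset.Icc 3 (n-2)).filter (fun j => Odd j))

/-!
Insert the alternatives one at a time in increasing order. If an order admits `k` slots for the next
alternative, then after the insertion the numbers of slots for the following one are `k + 1` and
`k - 1` times `1` when the inserted alternative is in `A`, and `2, 2, 3, …, k` when it is not. So
summing a function of the number of slots over the domain obeys a linear recursion, and the pairs
`2j + 1 ∈ A`, `2j + 2 ∉ A` all contribute the same transfer operator. It has the eigenfunction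
`√2 ^ k - 1` with eigenvalue `2 + 2√2`. This is unbounded in `k`, whereas the domain size is the sum
of the constant `1`; but an eigenfunction of the smaller eigenvalue `4` that grows like `k * 2 ^ k`
can be subtracted to bring it below a constant.
-/

/-- Extends an order on the alternatives `0, …, n - 1` by a new alternative `n`, placed in slot `p`:
exactly `p` old alternatives are ranked above it, so the slot `Fin.last n` is the bottom one. -/
def insertLast {n : ℕ} (p : Fin (n + 1)) (σ : Equiv.Perm (Fin n)) : Equiv.Perm (Fin (n + 1)) :=
  finSuccEquivLast.trans (σ.optionCongr.trans (finSuccEquiv' p).symm)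

@[simp]
theorem insertLast_last {n : ℕ} (p : Fin (n + 1)) (σ : Equiv.Perm (Fin n)) :
    insertLast p σ (Fin.last n) = p := by
  simp [insertLast]

@[simp]
theorem insertLast_castSucc {n : ℕ} (p : Fin (n + 1)) (σ : Equiv.Perm (Fin n)) (x : Fin n) :
    insertLast p σ x.castSucc = p.succAbove (σ x) := by
  simp [insertLast]

theorem insertLast_bijective (n : ℕ) :
    Function.Bijective fun x : Fin (n + 1) × Equiv.Perm (Fin n) => insertLast x.1 x.2 := by
  refine (Fintype.bijective_iff_injective_and_card _).2 ⟨?_, ?_⟩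
  · rintro ⟨p, σ⟩ ⟨q, τ⟩ h
    obtain rfl : p = q := by simpa using Equiv.congr_fun h (Fin.last n)
    have hστ : σ = τ := Equiv.ext fun x => by simpa using Equiv.congr_fun h x.castSucc
    rw [hστ]
  · simp [Fintype.card_perm, Nat.factorial_succ]

theorem lt_succAbove_iff_le_castSucc_of_le {n : ℕ} {p q : Fin (n + 1)} {x : Fin n} (h : p ≤ q) :
    q < p.succAbove x ↔ q ≤ x.castSucc := by
  rw [Fin.succAbove]
  split_ifs <;> grind

/-- The slots in which a new last alternative violates no never-condition of `A` on a triple made of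
it and two old alternatives. -/
def admissibleSlots (A : Finset ℕ) {n : ℕ} (σ : Equiv.Perm (Fin n)) : Finset (Fin (n + 1)) :=
  {p | ∀ i j : Fin n, i < j →
    ((j : ℕ) + 1 ∈ A → ¬ (σ j < σ i ∧ p ≤ (σ i).castSucc)) ∧
    ((j : ℕ) + 1 ∉ A → ¬ (p ≤ (σ i).castSucc ∧ p ≤ (σ j).castSucc))}

section Insertion

variable {A : Finset ℕ} {n : ℕ} {σ : Equiv.Perm (Fin n)} {p : Fin (n + 1)}

theorem insertLast_mem_setAltDomain_iff :
    insertLast p σ ∈ setAltDomain (n + 1) A ↔ σ ∈ setAltDomain n A ∧ p ∈ admissibleSlots A σ := by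
  simp only [setAltDomain, inSetAltDomain, admissibleSlots, Set.mem_ofPred_eq,
    Finset.mem_filter, Finset.mem_univ, true_and, Fin.forall_fin_succ', insertLast_castSucc,
    insertLast_last, Fin.castSucc_lt_castSucc_iff, Fin.castSucc_lt_last, (Fin.le_last _).not_gt,
    Fin.val_castSucc, Fin.succAbove_lt_succAbove_iff, Fin.lt_succAbove_iff_le_castSucc,
    IsEmpty.forall_iff, forall_const, implies_true, and_true, forall_and]
  tauto

theorem last_mem_admissibleSlots : Fin.last n ∈ admissibleSlots A σ := by
  simp [admissibleSlots, Fin.last_le_iff, Fin.castSucc_ne_last]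

-- In the conditions involving the last alternative, `x` is the rank of an old alternative, not the
-- alternative itself: every rank below `n` is attained, so `σ` drops out.
theorem mem_admissibleSlots_insertLast_iff {q : Fin (n + 2)} :
    q ∈ admissibleSlots A (insertLast p σ) ↔
      (∀ i j : Fin n, i < j →
        ((j : ℕ) + 1 ∈ A → ¬ (σ j < σ i ∧ q ≤ (p.succAbove (σ i)).castSucc)) ∧
        ((j : ℕ) + 1 ∉ A →
          ¬ (q ≤ (p.succAbove (σ i)).castSucc ∧ q ≤ (p.succAbove (σ j)).castSucc))) ∧
      ∀ x : Fin n,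
        (n + 1 ∈ A → ¬ (p ≤ x.castSucc ∧ q ≤ (p.succAbove x).castSucc)) ∧
        (n + 1 ∉ A → ¬ (q ≤ (p.succAbove x).castSucc ∧ q ≤ p.castSucc)) := by
  rw [← σ.forall_congr_right (q := fun x => (n + 1 ∈ A → _) ∧ (n + 1 ∉ A → _))]
  simp only [admissibleSlots, Finset.mem_filter, Finset.mem_univ, true_and, Fin.forall_fin_succ',
    insertLast_castSucc, insertLast_last, Fin.castSucc_lt_castSucc_iff, Fin.castSucc_lt_last,
    (Fin.le_last _).not_gt, Fin.val_castSucc, Fin.val_last, Fin.succAbove_lt_succAbove_iff,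
    Fin.lt_succAbove_iff_le_castSucc, IsEmpty.forall_iff, forall_const, implies_true, and_true,
    forall_and]
  tauto

theorem admissibleSlots_insertLast_last_of_mem (hA : n + 1 ∈ A) :
    admissibleSlots A (insertLast (Fin.last n) σ) =
      insert (Fin.last (n + 1)) ((admissibleSlots A σ).map Fin.castSuccEmb) := by
  ext q
  induction q using Fin.lastCases with
  | last => simp [last_mem_admissibleSlots]
  | cast q =>
    rw [mem_admissibleSlots_insertLast_iff]
    simp [admissibleSlots, hA, Fin.castSucc_ne_last]

theorem admissibleSlots_insertLast_of_mem (hA : n + 1 ∈ A) (hp : p ≠ Fin.last n) :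
    admissibleSlots A (insertLast p σ) = {Fin.last (n + 1)} := by
  refine Finset.eq_singleton_iff_unique_mem.2 ⟨last_mem_admissibleSlots, fun q hq => ?_⟩
  obtain ⟨m, rfl⟩ : ∃ m, n = m + 1 := Nat.exists_eq_succ_of_ne_zero (by omega)
  have hpm : p ≤ (Fin.last m).castSucc := Fin.le_castSucc_iff.2 (Fin.lt_last_iff_ne_last.2 hp)
  have hq' := ((mem_admissibleSlots_insertLast_iff.1 hq).2 (Fin.last m)).1 hA
  rw [Fin.succAbove_of_le_castSucc _ _ hpm, Fin.succ_last] at hq'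
  exact Fin.last_le_iff.1 (not_lt.1 fun hq₀ => hq' ⟨hpm, Fin.le_castSucc_iff.2 hq₀⟩)

theorem admissibleSlots_insertLast_last_of_notMem (hn : 0 < n) (hA : n + 1 ∉ A) :
    admissibleSlots A (insertLast (Fin.last n) σ) = {(Fin.last n).castSucc, Fin.last (n + 1)} := by
  obtain ⟨m, rfl⟩ := Nat.exists_eq_add_one.2 hn
  ext q
  rw [mem_admissibleSlots_insertLast_iff, Finset.mem_insert, Finset.mem_singleton]
  simp only [hA, Fin.succAbove_last, Fin.le_def, Fin.lt_def, Fin.ext_iff, Fin.val_castSucc,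
    Fin.val_last]
  constructor
  · rintro ⟨-, h⟩
    have := (h (Fin.last m)).2 not_false
    grind
  · grind

theorem admissibleSlots_insertLast_of_notMem (hA : n + 1 ∉ A) (hp : p ≠ Fin.last n) :
    admissibleSlots A (insertLast p σ) =
      ({q ∈ admissibleSlots A σ | p ≤ q} : Finset _).map (Fin.succEmb _) := by
  obtain ⟨m, rfl⟩ : ∃ m, n = m + 1 := Nat.exists_eq_succ_of_ne_zero (by omega)
  have hpm : p ≤ (Fin.last m).castSucc := Fin.le_castSucc_iff.2 (Fin.lt_last_iff_ne_last.2 hp)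
  ext q
  rw [mem_admissibleSlots_insertLast_iff]
  induction q using Fin.cases with
  | zero => simp [hA]
  | succ q =>
    have hpq : (∀ x, ¬ (q < p.succAbove x ∧ q < p)) ↔ p ≤ q := by
      refine ⟨fun h => not_lt.1 fun hq => h (Fin.last m) ⟨?_, hq⟩, fun h x hx => hx.2.not_ge h⟩
      exact hq.trans ((Fin.lt_succAbove_iff_le_castSucc _ _).2 hpm)
    rw [← Fin.coe_succEmb, Finset.mem_map', Finset.mem_filter, admissibleSlots]
    simp only [Fin.coe_succEmb, Fin.succ_le_castSucc_iff, hA, false_imp_iff, not_false_iff,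
      true_imp_iff, true_and, Finset.mem_filter, Finset.mem_univ, hpq]
    exact and_congr_left fun h => by simp only [lt_succAbove_iff_le_castSucc_of_le h]

end Insertion

theorem sum_apply_card_filter_le {α M : Type*} [LinearOrder α] [AddCommMonoid M] (s : Finset α)
    (f : ℕ → M) :
    ∑ a ∈ s, f {b ∈ s | a ≤ b}.card = ∑ i ∈ Finset.range s.card, f (i + 1) := by
  induction s using Finset.induction_on_min with
  | empty => simp
  | insert a s ha ih =>
    have has : a ∉ s := fun h => (ha a h).false
    have hmin : {b ∈ insert a s | a ≤ b} = insert a s :=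
      Finset.filter_true_of_mem <|
        (Finset.forall_mem_insert ..).2 ⟨le_rfl, fun b hb => (ha b hb).le⟩
    have hrest : ∀ c ∈ s, {b ∈ insert a s | c ≤ b} = {b ∈ s | c ≤ b} := fun c hc => by
      rw [Finset.filter_insert, if_neg (ha c hc).not_ge]
    rw [Finset.sum_insert has, hmin, Finset.card_insert_of_notMem has, Finset.sum_range_succ, ← ih,
      add_comm, Finset.sum_congr rfl fun c hc => by rw [hrest c hc]]

section Weight

variable {M : Type*} [AddCommMonoid M] {A : Finset ℕ} {n : ℕ}

open scoped Classical in
/-- The sum, over the orders of the domain, of a function `u` of the number of admissible slots for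
the next alternative. -/
noncomputable def slotSum (A : Finset ℕ) (n : ℕ) (u : ℕ → M) : M :=
  ∑ σ : Equiv.Perm (Fin n) with σ ∈ setAltDomain n A, u (admissibleSlots A σ).card

theorem slotSum_one_right {R : Type*} [AddCommMonoidWithOne R] :
    slotSum A n (1 : ℕ → R) = fsize n A := by
  classical
  simp [slotSum, fsize, Set.ncard_eq_toFinset_card']

theorem slotSum_congr {u v : ℕ → M} (h : ∀ k, 0 < k → u k = v k) :
    slotSum A n u = slotSum A n v :=
  Finset.sum_congr rfl fun _ _ => h _ (Finset.card_pos.2 ⟨_, last_mem_admissibleSlots⟩)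

theorem slotSum_mono [PartialOrder M] [IsOrderedAddMonoid M] {u v : ℕ → M}
    (h : ∀ k, 0 < k → u k ≤ v k) : slotSum A n u ≤ slotSum A n v :=
  Finset.sum_le_sum fun _ _ => h _ (Finset.card_pos.2 ⟨_, last_mem_admissibleSlots⟩)

theorem slotSum_succ {u v : ℕ → M}
    (h : ∀ σ : Equiv.Perm (Fin n), ∑ p ∈ admissibleSlots A σ,
      u (admissibleSlots A (insertLast p σ)).card = v (admissibleSlots A σ).card) :
    slotSum A (n + 1) u = slotSum A n v := by
  classical
  rw [slotSum, Finset.sum_filter, ← (insertLast_bijective n).sum_comp, Fintype.sum_prod_type_right]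
  simp only [insertLast_mem_setAltDomain_iff, ite_and, Finset.sum_ite_irrel, Finset.sum_const_zero,
    Finset.sum_ite_mem, Finset.univ_inter, h, slotSum, Finset.sum_filter]

theorem slotSum_succ_of_mem (hA : n + 1 ∈ A) (u : ℕ → M) :
    slotSum A (n + 1) u = slotSum A n fun k => u (k + 1) + (k - 1) • u 1 := by
  refine slotSum_succ fun σ => ?_
  have hbottom : (admissibleSlots A (insertLast (Fin.last n) σ)).card =
      (admissibleSlots A σ).card + 1 := by
    rw [admissibleSlots_insertLast_last_of_mem hA, Finset.card_insert_of_notMem (by simp),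
      Finset.card_map]
  have hother : ∀ p ∈ (admissibleSlots A σ).erase (Fin.last n),
      u (admissibleSlots A (insertLast p σ)).card = u 1 := fun p hp => by
    rw [admissibleSlots_insertLast_of_mem hA (Finset.ne_of_mem_erase hp), Finset.card_singleton]
  rw [← Finset.add_sum_erase _ _ last_mem_admissibleSlots, hbottom,
    Finset.sum_congr rfl hother, Finset.sum_const,
    Finset.card_erase_of_mem last_mem_admissibleSlots]

theorem slotSum_succ_of_notMem (hn : 0 < n) (hA : n + 1 ∉ A) (u : ℕ → M) :
    slotSum A (n + 1) u =
      slotSum A n fun k => u 2 + ∑ i ∈ Finset.range (k - 1), u (i + 2) := by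
  refine slotSum_succ fun σ => ?_
  set S := admissibleSlots A σ
  have hbottom : (admissibleSlots A (insertLast (Fin.last n) σ)).card = 2 := by
    rw [admissibleSlots_insertLast_last_of_notMem hn hA,
      Finset.card_pair (Fin.castSucc_ne_last _)]
  have hother : ∀ p ∈ S.erase (Fin.last n), u (admissibleSlots A (insertLast p σ)).card =
      u ({q ∈ S.erase (Fin.last n) | p ≤ q}.card + 1) := fun p hp => by
    rw [admissibleSlots_insertLast_of_notMem hA (Finset.ne_of_mem_erase hp), Finset.card_map,
      Finset.filter_erase, Finset.card_erase_add_one]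
    exact Finset.mem_filter.2 ⟨last_mem_admissibleSlots, Fin.le_last p⟩
  rw [← Finset.add_sum_erase _ _ last_mem_admissibleSlots, hbottom,
    Finset.sum_congr rfl hother, sum_apply_card_filter_le _ fun k => u (k + 1),
    Finset.card_erase_of_mem last_mem_admissibleSlots]

theorem slotSum_at_one (A : Finset ℕ) (u : ℕ → M) : slotSum A 1 u = u 2 := by
  simp [slotSum, setAltDomain, inSetAltDomain, admissibleSlots]

theorem slotSum_at_two (hA : 2 ∈ A) (u : ℕ → M) : slotSum A 2 u = u 3 + u 1 := by
  simp [slotSum_succ_of_mem hA, slotSum_at_one]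

theorem fsize_le_fsize_succ (n : ℕ) (A : Finset ℕ) : fsize n A ≤ fsize (n + 1) A := by
  rw [← Nat.cast_id (fsize n A), ← Nat.cast_id (fsize (n + 1) A), ← slotSum_one_right,
    ← slotSum_one_right, slotSum_succ (v := id) fun σ => by simp]
  exact slotSum_mono fun k hk => hk

theorem fsize_mono (A : Finset ℕ) : Monotone fun n => fsize n A :=
  monotone_nat_of_le_succ fun n => fsize_le_fsize_succ n A

end Weight

/-- The transfer operator of two consecutive insertions, of an alternative in `A` and then of one
not in `A`: it sends a function of the number of admissible slots to its sum over all ways of making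
these insertions in an order that starts with `k` admissible slots. -/
noncomputable def pairTransfer : Module.End ℝ (ℕ → ℝ) where
  toFun u k := ∑ i ∈ Finset.range k, (u 2 + u (i + 2))
  map_add' u v := by
    ext k
    simp only [Pi.add_apply, Finset.sum_add_distrib]
    ring
  map_smul' c u := by
    ext k
    simp [Finset.mul_sum, mul_add]

theorem pairTransfer_succ (u : ℕ → ℝ) (k : ℕ) :
    pairTransfer u (k + 1) = pairTransfer u k + (u 2 + u (k + 2)) :=
  Finset.sum_range_succ _ _

theorem slotSum_add_two {A : Finset ℕ} {n : ℕ} (hmem : n + 1 ∈ A) (hnotMem : n + 2 ∉ A)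
    (u : ℕ → ℝ) : slotSum A (n + 2) u = slotSum A n (pairTransfer u) := by
  rw [slotSum_succ_of_notMem n.succ_pos hnotMem, slotSum_succ_of_mem hmem]
  refine slotSum_congr fun k hk => ?_
  obtain ⟨k, rfl⟩ := Nat.exists_eq_add_one.2 hk
  simp only [pairTransfer, LinearMap.coe_mk, AddHom.coe_mk, add_tsub_cancel_right, tsub_self,
    Finset.range_zero, Finset.sum_empty, add_zero, nsmul_eq_mul, Finset.sum_add_distrib,
    Finset.sum_const, Finset.card_range, Nat.cast_add, Nat.cast_one]
  ring

/-- The eigenfunction of `pairTransfer` for the growth rate `2 + 2√2`. It is the case `q = √2` in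
which `q ^ k` needs only a constant correction: `pairTransfer` sends `q ^ k` to
`q ^ 2 / (q - 1) * (q ^ k - 1) + k * q ^ 2`, and `1` to `2 * k`. -/
noncomputable def growthEigenfun (k : ℕ) : ℝ := √2 ^ k - 1

/-- The eigenfunction of `pairTransfer` for the eigenvalue `4 < 2 + 2√2`. It outgrows
`growthEigenfun`, so subtracting it makes the latter bounded above without affecting the rate. The
value `4` is the minimum of `q ^ 2 / (q - 1)` over `q > 1`, attained at `q = 2`, whence the term
`k * 2 ^ k`. -/
def cutoffEigenfun (k : ℕ) : ℝ := (k - 4) * 2 ^ k + 4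

theorem hasEigenvector_growthEigenfun :
    pairTransfer.HasEigenvector (2 + 2 * √2) growthEigenfun := by
  have hs : √2 ^ 2 = 2 := Real.sq_sqrt zero_le_two
  refine ⟨Module.End.mem_eigenspace_iff.2 (funext fun k => ?_), fun h => ?_⟩
  · rw [Pi.smul_apply, smul_eq_mul]
    induction k with
    | zero => simp [pairTransfer, growthEigenfun]
    | succ k ih =>
      rw [pairTransfer_succ, ih]
      simp only [growthEigenfun, pow_add, hs]
      linear_combination (-2 * √2 ^ k) * hs
  · have := congrFun h 2
    norm_num [growthEigenfun] at this

theorem hasEigenvector_cutoffEigenfun : pairTransfer.HasEigenvector 4 cutoffEigenfun := by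
  refine ⟨Module.End.mem_eigenspace_iff.2 (funext fun k => ?_), fun h => ?_⟩
  · rw [Pi.smul_apply, smul_eq_mul]
    induction k with
    | zero => norm_num [pairTransfer, cutoffEigenfun]
    | succ k ih =>
      rw [pairTransfer_succ, ih]
      simp only [cutoffEigenfun]
      push_cast
      ring
  · have := congrFun h 2
    norm_num [cutoffEigenfun] at this

theorem growthEigenfun_sub_cutoffEigenfun_le (k : ℕ) :
    growthEigenfun k - cutoffEigenfun k ≤ 11 := by
  have hsqrt : √2 ^ k ≤ 2 ^ k :=
    pow_le_pow_left₀ (Real.sqrt_nonneg 2) (Real.sqrt_le_self_iff.2 (by norm_num)) k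
  have hcut : (5 - k) * 2 ^ k ≤ (16 : ℝ) := by
    rcases le_or_gt 5 k with hk | hk
    · have : (5 : ℝ) ≤ k := by exact_mod_cast hk
      nlinarith [pow_pos (two_pos (α := ℝ)) k]
    · interval_cases k <;> norm_num
  simp only [growthEigenfun, cutoffEigenfun]
  linarith

section AlternatingScheme

variable {A : Finset ℕ} {m : ℕ}

theorem slotSum_two_mul_add_two (hA : ∀ j, 1 ≤ j → j ≤ m → 2 * j + 1 ∈ A ∧ 2 * j + 2 ∉ A)
    (u : ℕ → ℝ) : slotSum A (2 * m + 2) u = slotSum A 2 ((pairTransfer ^ m) u) := by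
  induction m generalizing u with
  | zero => simp
  | succ m ih =>
    obtain ⟨hmem, hnotMem⟩ := hA (m + 1) m.succ_pos le_rfl
    rw [slotSum_add_two hmem hnotMem, mul_add_one,
      ih (fun j hj hjm => hA j hj (hjm.trans m.le_succ)), pow_succ, Module.End.mul_apply]

theorem pow_le_fsize (h2 : 2 ∈ A) (hA : ∀ j, 1 ≤ j → j ≤ m → 2 * j + 1 ∈ A ∧ 2 * j + 2 ∉ A) :
    2 / 11 * (2 + 2 * √2) ^ m ≤ (fsize (2 * m + 2) A : ℝ) := by
  have hs : √2 ^ 2 = 2 := Real.sq_sqrt zero_le_two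
  have hs' : 4 / 3 ≤ √2 := Real.le_sqrt_of_sq_le (by norm_num)
  set u : ℕ → ℝ := (1 / 11 : ℝ) • (growthEigenfun - cutoffEigenfun) with hu
  have hu_le : ∀ k, 0 < k → u k ≤ (1 : ℕ → ℝ) k := fun k _ => by
    have := growthEigenfun_sub_cutoffEigenfun_le k
    simp only [hu, Pi.smul_apply, Pi.sub_apply, smul_eq_mul, Pi.one_apply]
    linarith
  have hiter : (pairTransfer ^ m) u =
      (1 / 11 : ℝ) • ((2 + 2 * √2) ^ m • growthEigenfun - (4 : ℝ) ^ m • cutoffEigenfun) := by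
    rw [hu, map_smul, map_sub, hasEigenvector_growthEigenfun.pow_apply,
      hasEigenvector_cutoffEigenfun.pow_apply]
  have hgrowth : 2 ≤ growthEigenfun 3 + growthEigenfun 1 := by
    simp only [growthEigenfun, pow_succ' _ 2, hs]
    linarith
  have hcutoff : cutoffEigenfun 3 + cutoffEigenfun 1 ≤ 0 := by norm_num [cutoffEigenfun]
  calc 2 / 11 * (2 + 2 * √2) ^ m
      ≤ 1 / 11 * ((2 + 2 * √2) ^ m * (growthEigenfun 3 + growthEigenfun 1)
          - 4 ^ m * (cutoffEigenfun 3 + cutoffEigenfun 1)) := by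
        have := mul_le_mul_of_nonneg_left hgrowth (by positivity : 0 ≤ (2 + 2 * √2) ^ m)
        have := mul_nonpos_of_nonneg_of_nonpos (by positivity : (0 : ℝ) ≤ 4 ^ m) hcutoff
        linarith
    _ = slotSum A (2 * m + 2) u := by
        rw [slotSum_two_mul_add_two hA, slotSum_at_two h2, hiter]
        simp only [Pi.smul_apply, Pi.sub_apply, smul_eq_mul]
        ring
    _ ≤ slotSum A (2 * m + 2) 1 := slotSum_mono hu_le
    _ = fsize (2 * m + 2) A := slotSum_one_right

end AlternatingScheme

theorem two_mem_oddB (n : ℕ) : 2 ∈ oddB n := by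
  unfold oddB
  split_ifs <;> exact Finset.mem_insert_self ..

theorem two_mul_add_one_mem_oddB {n j : ℕ} (hj : 1 ≤ j) (hjn : 2 * j + 3 ≤ n) :
    2 * j + 1 ∈ oddB n := by
  unfold oddB
  split_ifs with hn <;>
    simp only [Finset.mem_insert, Finset.mem_filter, Finset.mem_Icc] <;> grind

theorem two_mul_add_two_notMem_oddB {n j : ℕ} (hj : 1 ≤ j) : 2 * j + 2 ∉ oddB n := by
  unfold oddB
  split_ifs <;>
    simp only [Finset.mem_insert, Finset.mem_filter, Finset.mem_Icc] <;> grind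

/-- there is `c > 0` with `f_n(B_n) ≥ c·(2+2√2)^{n/2}` for all
`n ≥ 5`; i.e. the odd scheme generates domains of size `Ω((√(2+2√2))^n)`. -/
theorem stmt19 :
    ∃ c : ℝ, 0 < c ∧ ∀ n : ℕ, 5 ≤ n →
      c * (2 + 2 * Real.sqrt 2) ^ ((n : ℝ) / 2) ≤ (fsize n (oddB n) : ℝ) := by
  refine ⟨2 / 11 / (2 + 2 * √2) ^ 2, by positivity, fun n hn => ?_⟩
  obtain ⟨m, hm, hmn⟩ : ∃ m, 2 * m + 3 ≤ n ∧ n ≤ 2 * (m + 2) := ⟨(n - 3) / 2, by omega, by omega⟩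
  have hbase : 1 ≤ 2 + 2 * √2 := by linarith [Real.sqrt_nonneg 2]
  have hexp : (n : ℝ) / 2 ≤ (m + 2 : ℕ) := by
    rw [div_le_iff₀' two_pos]
    exact_mod_cast hmn
  calc 2 / 11 / (2 + 2 * √2) ^ 2 * (2 + 2 * √2) ^ ((n : ℝ) / 2)
      ≤ 2 / 11 / (2 + 2 * √2) ^ 2 * (2 + 2 * √2) ^ (m + 2) := by
        gcongr
        exact (Real.rpow_le_rpow_of_exponent_le hbase hexp).trans_eq (Real.rpow_natCast _ _)
    _ = 2 / 11 * (2 + 2 * √2) ^ m := by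
        rw [pow_add]
        field_simp
    _ ≤ fsize (2 * m + 2) (oddB n) :=
        pow_le_fsize (two_mem_oddB n) fun j hj hjm =>
          ⟨two_mul_add_one_mem_oddB hj (by omega), two_mul_add_two_notMem_oddB hj⟩
    _ ≤ fsize n (oddB n) := by exact_mod_cast fsize_mono (oddB n) (by omega : 2 * m + 2 ≤ n)
end
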